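/- arXiv:hep-th/9709112 — 6 statements merged into one kernel-verified Lean document; each statement's English description precedes it below -/
import Mathlib

section
/- Let n₁, n₂ be natural numbers and let w₁ : Fin n₁ → ℝ and w₂ : Fin n₂ → ℝ take only the values +1 and −1. Suppose n₁ is even and the volume element ω₁ = e₁e₂⋯e_{n₁} of Clℝ(w₁) satisfies ω₁² = 1 (i.e. Clℝ(w₁) is a positive Clifford algebra). Then the Clifford algebra Clℝ(Sum.elim w₁ w₂ ∘ finSumFinEquiv.symm) on Fin (n₁ + n₂) → ℝ is isomorphic as an ℝ-algebra to the tensor product Clℝ(w₁) ⊗[ℝ] Clℝ(w₂). -/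
open CliffordAlgebra TensorProduct

/-- The volume element `ω = e₁e₂⋯eₙ` of the Clifford algebra of the weighted
sum-of-squares form with weights `w : Fin n → ℝ`. -/
noncomputable def volumeElem {n : ℕ} (w : Fin n → ℝ) :
    CliffordAlgebra (QuadraticMap.weightedSumSquares ℝ w) :=
  ((List.finRange n).map fun i =>
    CliffordAlgebra.ι (QuadraticMap.weightedSumSquares ℝ w) (Pi.single i 1)).prod

/-!
The Clifford algebra of an orthogonal sum `Q₁ ⊕ Q₂` is the *graded* tensor product of the two
Clifford algebras, in which the generators `x₁ ⊗ 1` and `1 ⊗ x₂` anticommute. When `Q₁` has even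
dimension, its volume element `ω` is even and anticommutes with every vector of `Q₁`; if moreover
`ω² = 1`, then replacing `1 ⊗ x₂` by `ω ⊗ x₂` in the ordinary tensor product restores the
anticommutation without changing the squares. Undoing this twist, i.e. sending `1 ⊗ x₂` to `ω x₂`,
gives the inverse.
-/

section

variable {R M A : Type*} [CommRing R] [AddCommGroup M] [Module R M] [Ring A] [Algebra R A]
  {Q : QuadraticForm R M}

theorem commute_of_forall_commute_ι (f : CliffordAlgebra Q →ₐ[R] A) {a : A}
    (h : ∀ m, Commute (f (ι Q m)) a) (x : CliffordAlgebra Q) : Commute (f x) a := by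
  induction x using CliffordAlgebra.induction with
  | algebraMap r => exact f.commutes r ▸ Algebra.commute_algebraMap_left r a
  | ι m => exact h m
  | mul x y hx hy => exact map_mul f x y ▸ hx.mul_left hy
  | add x y hx hy => exact map_add f x y ▸ hx.add_left hy

theorem prod_map_ι_mem_evenOdd (l : List M) : (l.map (ι Q)).prod ∈ evenOdd Q l.length := by
  simpa using SetLike.list_prod_map_mem_graded l (fun _ => (1 : ZMod 2)) (ι Q)
    fun m _ => ι_mem_evenOdd_one Q m

theorem ι_mul_prod_map_ι_of_forall_isOrtho {m : M} {l : List M} (h : ∀ v ∈ l, Q.IsOrtho m v) :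
    ι Q m * (l.map (ι Q)).prod = (-1 : R) ^ l.length • ((l.map (ι Q)).prod * ι Q m) := by
  induction l with
  | nil => simp
  | cons v l ih =>
    rw [List.forall_mem_cons] at h
    rw [List.map_cons, List.prod_cons, ι_mul_ι_mul_of_isOrtho _ h.1, ih h.2]
    simp [pow_succ, mul_assoc]

theorem ι_mul_prod_map_ι_of_mem {m : M} {l : List M} (hm : m ∈ l) (hl : l.Pairwise Q.IsOrtho) :
    ι Q m * (l.map (ι Q)).prod = (-1 : R) ^ (l.length + 1) • ((l.map (ι Q)).prod * ι Q m) := by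
  induction l with
  | nil => simp at hm
  | cons v l ih =>
    rw [List.pairwise_cons] at hl
    rw [List.map_cons, List.prod_cons]
    obtain rfl | hm := List.mem_cons.mp hm
    · rw [mul_assoc, ι_mul_prod_map_ι_of_forall_isOrtho hl.1]
      simp [pow_succ]
    · rw [ι_mul_ι_mul_of_isOrtho _ (hl.1 m hm).symm, ih hm hl.2]
      simp [pow_succ, mul_assoc]

theorem ι_mul_prod_map_ι_of_even {l : List M} (hl : l.Pairwise Q.IsOrtho)
    (hspan : Submodule.span R {v | v ∈ l} = ⊤) (heven : Even l.length) (m : M) :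
    ι Q m * (l.map (ι Q)).prod = -((l.map (ι Q)).prod * ι Q m) := by
  set ω := (l.map (ι Q)).prod
  suffices LinearMap.mulRight R ω ∘ₗ ι Q = -(LinearMap.mulLeft R ω ∘ₗ ι Q) from
    DFunLike.congr_fun this m
  refine LinearMap.ext_on hspan fun v hv => ?_
  simpa [heven.add_one.neg_one_pow] using ι_mul_prod_map_ι_of_mem hv hl

/-- `ω` behaves like the volume element of a positive Clifford algebra (in Karoubi's sense) of an
even-dimensional form `Q`. Only these properties of the volume element enter the isomorphism
`IsPositiveVolume.prodEquivTensor`, so no basis of `M` is chosen. -/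
structure IsPositiveVolume (Q : QuadraticForm R M) (ω : CliffordAlgebra Q) : Prop where
  mem_even : ω ∈ evenOdd Q 0
  mul_self : ω * ω = 1
  ι_mul (m : M) : ι Q m * ω = -(ω * ι Q m)

theorem isPositiveVolume_prod_map_ι {l : List M} (hl : l.Pairwise Q.IsOrtho)
    (hspan : Submodule.span R {v | v ∈ l} = ⊤) (heven : Even l.length)
    (hsq : (l.map (ι Q)).prod ^ 2 = 1) : IsPositiveVolume Q (l.map (ι Q)).prod where
  mem_even := (ZMod.natCast_eq_zero_iff_even.2 heven) ▸ prod_map_ι_mem_evenOdd l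
  mul_self := by rw [← sq, hsq]
  ι_mul := ι_mul_prod_map_ι_of_even hl hspan heven

end

namespace IsPositiveVolume

variable {R M₁ M₂ : Type*} [CommRing R] [AddCommGroup M₁] [AddCommGroup M₂] [Module R M₁]
  [Module R M₂] {Q₁ : QuadraticForm R M₁} {ω : CliffordAlgebra Q₁} (Q₂ : QuadraticForm R M₂)

theorem tmul_add_tmul_mul_self (hω : IsPositiveVolume Q₁ ω) (m : M₁ × M₂) :
    (ι Q₁ m.1 ⊗ₜ[R] 1 + ω ⊗ₜ[R] ι Q₂ m.2) * (ι Q₁ m.1 ⊗ₜ[R] 1 + ω ⊗ₜ[R] ι Q₂ m.2) =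
      algebraMap R (CliffordAlgebra Q₁ ⊗[R] CliffordAlgebra Q₂) (Q₁.prod Q₂ m) := by
  simp only [mul_add, add_mul, Algebra.TensorProduct.tmul_mul_tmul, one_mul, mul_one, ι_sq_scalar,
    hω.mul_self, hω.ι_mul, neg_tmul, QuadraticMap.prod_apply, map_add,
    ← Algebra.TensorProduct.algebraMap_apply, ← Algebra.TensorProduct.algebraMap_apply']
  abel

/-- The homomorphism `Cl(Q₁ ⊕ Q₂) → Cl(Q₁) ⊗ Cl(Q₂)` sending the vector `(m₁, m₂)` to
`m₁ ⊗ 1 + ω ⊗ m₂`; the forward direction of `IsPositiveVolume.prodEquivTensor`. -/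
noncomputable def toTensor (hω : IsPositiveVolume Q₁ ω) :
    CliffordAlgebra (Q₁.prod Q₂) →ₐ[R] CliffordAlgebra Q₁ ⊗[R] CliffordAlgebra Q₂ :=
  lift _ ⟨LinearMap.coprod
      ((TensorProduct.mk R _ _).flip 1 ∘ₗ ι Q₁) (TensorProduct.mk R _ _ ω ∘ₗ ι Q₂),
    hω.tmul_add_tmul_mul_self Q₂⟩

@[simp]
theorem toTensor_ι (hω : IsPositiveVolume Q₁ ω) (m : M₁ × M₂) :
    hω.toTensor Q₂ (ι _ m) = ι Q₁ m.1 ⊗ₜ[R] 1 + ω ⊗ₜ[R] ι Q₂ m.2 :=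
  lift_ι_apply _ _ _

@[simp]
theorem toTensor_map_inl (hω : IsPositiveVolume Q₁ ω) (x : CliffordAlgebra Q₁) :
    hω.toTensor Q₂ (map (.inl Q₁ Q₂) x) = x ⊗ₜ[R] 1 := by
  have : (hω.toTensor Q₂).comp (map (.inl Q₁ Q₂)) = Algebra.TensorProduct.includeLeft := by
    ext m
    simp
  exact DFunLike.congr_fun this x

theorem map_inl_mul_self (hω : IsPositiveVolume Q₁ ω) :
    map (.inl Q₁ Q₂) ω * map (.inl Q₁ Q₂) ω = 1 := by
  rw [← map_mul, hω.mul_self, map_one]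

theorem commute_map_inl_ι (hω : IsPositiveVolume Q₁ ω) (m : M₂) :
    Commute (map (.inl Q₁ Q₂) ω) (ι (Q₁.prod Q₂) (0, m)) := by
  simpa using commute_map_mul_map_of_isOrtho_of_mem_evenOdd_zero_left (.inl Q₁ Q₂) (.inr Q₁ Q₂)
    QuadraticMap.IsOrtho.inl_inr ω (ι Q₂ m) hω.mem_even (ι_mem_evenOdd_one Q₂ m)

/-- The homomorphism `Cl(Q₂) → Cl(Q₁ ⊕ Q₂)` sending the vector `m` to `ω m`. Unlike the one induced
by the inclusion of `M₂`, its image commutes with `Cl(Q₁)`. -/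
noncomputable def twistedInr (hω : IsPositiveVolume Q₁ ω) :
    CliffordAlgebra Q₂ →ₐ[R] CliffordAlgebra (Q₁.prod Q₂) :=
  lift Q₂ ⟨LinearMap.mulLeft R (map (.inl Q₁ Q₂) ω) ∘ₗ ι (Q₁.prod Q₂) ∘ₗ LinearMap.inr R M₁ M₂,
    fun m => by
      simp [(hω.commute_map_inl_ι Q₂ m).symm.mul_mul_mul_comm, hω.map_inl_mul_self]⟩

@[simp]
theorem twistedInr_ι (hω : IsPositiveVolume Q₁ ω) (m : M₂) :
    hω.twistedInr Q₂ (ι Q₂ m) = map (.inl Q₁ Q₂) ω * ι (Q₁.prod Q₂) (0, m) :=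
  lift_ι_apply _ _ _

theorem commute_map_inl_ι_twistedInr_ι (hω : IsPositiveVolume Q₁ ω) (m₁ : M₁) (m₂ : M₂) :
    Commute (map (.inl Q₁ Q₂) (ι Q₁ m₁)) (hω.twistedInr Q₂ (ι Q₂ m₂)) := by
  have anti_ω : map (.inl Q₁ Q₂) (ι Q₁ m₁) * map (.inl Q₁ Q₂) ω =
      -(map (.inl Q₁ Q₂) ω * map (.inl Q₁ Q₂) (ι Q₁ m₁)) := by
    rw [← map_mul, hω.ι_mul, map_neg, map_mul]
  have anti_m₂ : map (.inl Q₁ Q₂) (ι Q₁ m₁) * ι (Q₁.prod Q₂) (0, m₂) =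
      -(ι (Q₁.prod Q₂) (0, m₂) * map (.inl Q₁ Q₂) (ι Q₁ m₁)) := by
    rw [map_apply_ι]
    exact ι_mul_ι_comm_of_isOrtho (.inl_inr m₁ m₂)
  rw [commute_iff_eq, twistedInr_ι, ← mul_assoc, anti_ω, neg_mul, mul_assoc, anti_m₂, mul_neg,
    neg_neg, mul_assoc]

theorem commute_map_inl_twistedInr (hω : IsPositiveVolume Q₁ ω) (x : CliffordAlgebra Q₁)
    (y : CliffordAlgebra Q₂) :
    Commute (map (.inl Q₁ Q₂) x) (hω.twistedInr Q₂ y) :=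
  commute_of_forall_commute_ι _ (fun m₁ => .symm <| commute_of_forall_commute_ι _
    (fun m₂ => (hω.commute_map_inl_ι_twistedInr_ι Q₂ m₁ m₂).symm) y) x

/-- The homomorphism `Cl(Q₁) ⊗ Cl(Q₂) → Cl(Q₁ ⊕ Q₂)` sending `m₁ ⊗ 1` to `m₁` and `1 ⊗ m₂` to
`ω m₂`; the reverse direction of `IsPositiveVolume.prodEquivTensor`. -/
noncomputable def ofTensor (hω : IsPositiveVolume Q₁ ω) :
    CliffordAlgebra Q₁ ⊗[R] CliffordAlgebra Q₂ →ₐ[R] CliffordAlgebra (Q₁.prod Q₂) :=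
  Algebra.TensorProduct.lift (map (.inl Q₁ Q₂)) (hω.twistedInr Q₂)
    (hω.commute_map_inl_twistedInr Q₂)

@[simp]
theorem ofTensor_tmul (hω : IsPositiveVolume Q₁ ω) (x : CliffordAlgebra Q₁)
    (y : CliffordAlgebra Q₂) :
    hω.ofTensor Q₂ (x ⊗ₜ y) = map (.inl Q₁ Q₂) x * hω.twistedInr Q₂ y :=
  Algebra.TensorProduct.lift_tmul _ _ _ _ _

theorem toTensor_comp_ofTensor (hω : IsPositiveVolume Q₁ ω) :
    (hω.toTensor Q₂).comp (hω.ofTensor Q₂) = AlgHom.id R _ := by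
  ext m <;> simp [hω.mul_self]

theorem ofTensor_comp_toTensor (hω : IsPositiveVolume Q₁ ω) :
    (hω.ofTensor Q₂).comp (hω.toTensor Q₂) = AlgHom.id R _ := by
  ext m <;> simp [← mul_assoc, hω.map_inl_mul_self]

/-- Karoubi's isomorphism `Cl(Q₁ ⊕ Q₂) ≃ Cl(Q₁) ⊗ Cl(Q₂)` for positive `Cl(Q₁)`; the tensor product
is the ungraded one, in contrast to `CliffordAlgebra.prodEquiv`. -/
noncomputable def prodEquivTensor (hω : IsPositiveVolume Q₁ ω) :
    CliffordAlgebra (Q₁.prod Q₂) ≃ₐ[R] CliffordAlgebra Q₁ ⊗[R] CliffordAlgebra Q₂ :=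
  AlgEquiv.ofAlgHom (hω.toTensor Q₂) (hω.ofTensor Q₂) (hω.toTensor_comp_ofTensor Q₂)
    (hω.ofTensor_comp_toTensor Q₂)

end IsPositiveVolume

section

variable {R : Type*} [CommRing R]

theorem weightedSumSquares_isOrtho_single {κ : Type*} [Fintype κ] [DecidableEq κ] (w : κ → R)
    {i j : κ} (h : i ≠ j) (a b : R) :
    (QuadraticMap.weightedSumSquares R w).IsOrtho (Pi.single i a) (Pi.single j b) := by
  simp only [QuadraticMap.isOrtho_def, QuadraticMap.weightedSumSquares_apply,
    ← Finset.sum_add_distrib]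
  refine Finset.sum_congr rfl fun k _ => ?_
  obtain rfl | hk := eq_or_ne k i
  · simp [Pi.single_eq_of_ne h]
  · simp [Pi.single_eq_of_ne hk]

theorem isPositiveVolume_weightedSumSquares {n : ℕ} (w : Fin n → R) (hn : Even n)
    (hsq : ((List.finRange n).map fun i =>
      ι (QuadraticMap.weightedSumSquares R w) (Pi.single i 1)).prod ^ 2 = 1) :
    IsPositiveVolume (QuadraticMap.weightedSumSquares R w)
      ((List.finRange n).map fun i =>
        ι (QuadraticMap.weightedSumSquares R w) (Pi.single i 1)).prod := by
  let e : List (Fin n → R) := (List.finRange n).map fun i => Pi.single i 1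
  have e_ortho : e.Pairwise (QuadraticMap.weightedSumSquares R w).IsOrtho :=
    List.pairwise_map.2 <| (List.nodup_finRange n).imp fun h =>
      weightedSumSquares_isOrtho_single w h 1 1
  have e_span : Submodule.span R {v | v ∈ e} = ⊤ := by
    simpa [e, Set.range] using (Pi.basisFun R (Fin n)).span_eq
  have e_even : Even e.length := by simpa [e] using hn
  simpa [e, Function.comp_def] using
    isPositiveVolume_prod_map_ι e_ortho e_span e_even (by simpa [e, Function.comp_def] using hsq)

/-- The weighted sum of squares on a disjoint union of index types is the orthogonal sum of the
two parts; the equivalence `e` allows for index types such as `Fin (n₁ + n₂)`. -/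
def isometryEquivWeightedSumSquaresSumElim {κ κ₁ κ₂ : Type*} [Fintype κ] [Fintype κ₁] [Fintype κ₂]
    (e : κ₁ ⊕ κ₂ ≃ κ) (w₁ : κ₁ → R) (w₂ : κ₂ → R) :
    (QuadraticMap.weightedSumSquares R (Sum.elim w₁ w₂ ∘ e.symm)).IsometryEquiv
      ((QuadraticMap.weightedSumSquares R w₁).prod (QuadraticMap.weightedSumSquares R w₂)) where
  toLinearEquiv := LinearEquiv.funCongrLeft R R e ≪≫ₗ LinearEquiv.sumArrowLequivProdArrow κ₁ κ₂ R R
  map_app' m := by simp [← e.sum_comp, LinearMap.funLeft_apply]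

end

theorem cliffordAlgebra_sum_of_positive_general {R : Type*} [CommRing R] {n₁ n₂ : ℕ}
    (w₁ : Fin n₁ → R) (w₂ : Fin n₂ → R) (hn₁ : Even n₁)
    (hω : ((List.finRange n₁).map fun i =>
      ι (QuadraticMap.weightedSumSquares R w₁) (Pi.single i 1)).prod ^ 2 = 1) :
    Nonempty
      (CliffordAlgebra
          (QuadraticMap.weightedSumSquares R (Sum.elim w₁ w₂ ∘ finSumFinEquiv.symm)) ≃ₐ[R]
        CliffordAlgebra (QuadraticMap.weightedSumSquares R w₁) ⊗[R]
          CliffordAlgebra (QuadraticMap.weightedSumSquares R w₂)) :=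
  ⟨(equivOfIsometry (isometryEquivWeightedSumSquaresSumElim finSumFinEquiv w₁ w₂)).trans
    ((isPositiveVolume_weightedSumSquares w₁ hn₁ hω).prodEquivTensor _)⟩

/-- Karoubi's theorem, positive case: if `n₁` is even and the volume element of
`Clℝ(w₁)` squares to `1`, then `Clℝ(w₁ ⊕ w₂) ≅ Clℝ(w₁) ⊗[ℝ] Clℝ(w₂)`. -/
theorem cliffordAlgebra_sum_of_positive (n₁ n₂ : ℕ) (w₁ : Fin n₁ → ℝ) (w₂ : Fin n₂ → ℝ)
    (hw₁ : ∀ i, w₁ i = 1 ∨ w₁ i = -1) (hw₂ : ∀ i, w₂ i = 1 ∨ w₂ i = -1)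
    (hn₁ : Even n₁) (hω : volumeElem w₁ ^ 2 = 1) :
    Nonempty
      (CliffordAlgebra
          (QuadraticMap.weightedSumSquares ℝ (Sum.elim w₁ w₂ ∘ finSumFinEquiv.symm)) ≃ₐ[ℝ]
        CliffordAlgebra (QuadraticMap.weightedSumSquares ℝ w₁) ⊗[ℝ]
          CliffordAlgebra (QuadraticMap.weightedSumSquares ℝ w₂)) :=
  cliffordAlgebra_sum_of_positive_general w₁ w₂ hn₁ hω
end

section
/- For all natural numbers n, m and l with l ≤ n, the Clifford algebra Clℝ(w(l+m, n+2m)) is isomorphic as an ℝ-algebra to the matrix algebra Matrix (Fin (2^m)) (Fin (2^m)) (Clℝ(w(l, n))) of 2^m × 2^m matrices over the Clifford algebra Clℝ(w(l, n)). (This is the paper's Theorem 2: the algebra ^{l+m}K_{n+2m} is isomorphic to M_{2^m}(^{l}K_n), for K = ℝ.) -/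
/-- The sign weight function `w(l, n) : Fin n → ℝ`: `-1` on the first `l` indices,
`+1` on the rest. -/
def signWeights (l n : ℕ) : Fin n → ℝ := fun i => if (i : ℕ) < l then -1 else 1

/-!
A hyperbolic plane contributes generators `e`, `f` with `e² = f² = 0` and `ef + fe = 1`, so that
`ef`, `e`, `f`, `fe` are `2 × 2` matrix units. The vectors `v` of `Q` anticommute with `e` and `f`,
but after the twist `v ↦ v g` by `g = ef - fe`, where `g² = 1`, they commute with the matrix units
and still square to `Q v`. Hence `Cl(Q ⊥ H) ≅ M₂(Cl Q)`, and `Cl(Q ⊥ mH)` follows by iteration.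
When `2` is invertible, `-x² + y² = (y + x)(y - x)` is a hyperbolic plane, so passing from the signs
`w(l, n)` to `w(l + m, n + 2m)` adds `m` hyperbolic planes.
-/

open CliffordAlgebra QuadraticMap

section HyperbolicPair

/-- Two square-zero elements `e`, `f` of a ring with `ef + fe = 1`: the relations between the
isotropic generators of the Clifford algebra of a hyperbolic plane. -/
structure IsHyperbolicPair {A : Type*} [Ring A] (e f : A) : Prop where
  left_mul_self : e * e = 0
  right_mul_self : f * f = 0
  mul_add_mul_swap : e * f + f * e = 1

namespace IsHyperbolicPair

variable {A : Type*} [Ring A] {e f : A}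

theorem symm (h : IsHyperbolicPair e f) : IsHyperbolicPair f e :=
  ⟨h.right_mul_self, h.left_mul_self, by rw [add_comm, h.mul_add_mul_swap]⟩

theorem mul_mul_cancel (h : IsHyperbolicPair e f) : e * f * e = e := by
  rw [eq_sub_of_add_eq h.mul_add_mul_swap, sub_mul, mul_assoc, h.left_mul_self, one_mul, mul_zero,
    sub_zero]

theorem sub_mul_left (h : IsHyperbolicPair e f) : (e * f - f * e) * e = e := by
  rw [sub_mul, h.mul_mul_cancel, mul_assoc, h.left_mul_self, mul_zero, sub_zero]

theorem left_mul_sub (h : IsHyperbolicPair e f) : e * (e * f - f * e) = -e := by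
  rw [mul_sub, ← mul_assoc, ← mul_assoc, h.mul_mul_cancel, h.left_mul_self, zero_mul, zero_sub]

theorem sub_mul_right (h : IsHyperbolicPair e f) : (e * f - f * e) * f = -f := by
  rw [← neg_sub, neg_mul, h.symm.sub_mul_left]

theorem right_mul_sub (h : IsHyperbolicPair e f) : f * (e * f - f * e) = f := by
  rw [← neg_sub, mul_neg, h.symm.left_mul_sub, neg_neg]

theorem sub_mul_self (h : IsHyperbolicPair e f) :
    (e * f - f * e) * (e * f - f * e) = 1 := by
  rw [mul_sub, ← mul_assoc, ← mul_assoc, h.sub_mul_left, h.sub_mul_right, neg_mul, sub_neg_eq_add,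
    h.mul_add_mul_swap]

theorem commute_left_mul_sub (h : IsHyperbolicPair e f) {x : A} (hx : e * x = -(x * e)) :
    Commute e (x * (e * f - f * e)) :=
  calc e * (x * (e * f - f * e))
      = -(x * (e * (e * f - f * e))) := by rw [← mul_assoc, hx, neg_mul, mul_assoc]
    _ = x * (e * f - f * e) * e := by
      rw [h.left_mul_sub, mul_neg, neg_neg, mul_assoc, h.sub_mul_left]

theorem commute_right_mul_sub (h : IsHyperbolicPair e f) {x : A} (hx : f * x = -(x * f)) :
    Commute f (x * (e * f - f * e)) := by
  rw [← neg_sub, mul_neg]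
  exact (h.symm.commute_left_mul_sub hx).neg_right

variable {R C : Type*} [CommSemiring R] [Semiring C] [Algebra R C] [Algebra R A]

/-- A hyperbolic pair is the same as a `2 × 2` system of matrix units `ef`, `e`, `f`, `fe`; it
extends an algebra map `j` commuting with the pair to `2 × 2` matrices. -/
def matrixLift (h : IsHyperbolicPair e f) (j : C →ₐ[R] A) (he : ∀ c, Commute e (j c))
    (hf : ∀ c, Commute f (j c)) : Matrix (Fin 2) (Fin 2) C →ₐ[R] A :=
  AlgHom.ofLinearMap
    { toFun := fun M => j (M 0 0) * (e * f) + j (M 0 1) * e + j (M 1 0) * f + j (M 1 1) * (f * e)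
      map_add' := fun M N => by simp only [Matrix.add_apply, map_add, add_mul]; abel
      map_smul' := fun r M => by simp [smul_add] }
    (by simp [h.mul_add_mul_swap])
    (fun M N => by
      have hefe : e * (f * e) = e := by rw [← mul_assoc, h.mul_mul_cancel]
      have hfef : f * (e * f) = f := by rw [← mul_assoc, h.symm.mul_mul_cancel]
      have hee (a : A) : e * (e * a) = 0 := by rw [← mul_assoc, h.left_mul_self, zero_mul]
      have hff (a : A) : f * (f * a) = 0 := by rw [← mul_assoc, h.right_mul_self, zero_mul]
      simp only [LinearMap.coe_mk, AddHom.coe_mk, Matrix.mul_apply, Fin.sum_univ_two, map_add,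
        map_mul, add_mul, mul_add, mul_assoc, (he _).left_comm, (hf _).left_comm,
        h.left_mul_self, h.right_mul_self, hee, hff, hefe, hfef, mul_zero]
      abel)

theorem matrixLift_apply (h : IsHyperbolicPair e f) (j : C →ₐ[R] A) (he : ∀ c, Commute e (j c))
    (hf : ∀ c, Commute f (j c)) (M : Matrix (Fin 2) (Fin 2) C) :
    h.matrixLift j he hf M =
      j (M 0 0) * (e * f) + j (M 0 1) * e + j (M 1 0) * f + j (M 1 1) * (f * e) :=
  rfl

end IsHyperbolicPair

end HyperbolicPair

section CliffordAlgebra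

variable {R M : Type*} [CommRing R] [AddCommGroup M] [Module R M]

theorem commute_algHom_of_forall_ι {Q : QuadraticForm R M} {A : Type*} [Semiring A] [Algebra R A]
    (φ : CliffordAlgebra Q →ₐ[R] A) {a : A} (h : ∀ v, Commute a (φ (ι Q v)))
    (c : CliffordAlgebra Q) : Commute a (φ c) := by
  induction c using CliffordAlgebra.induction with
  | algebraMap r => rw [AlgHom.commutes]; exact (Algebra.commutes r a).symm
  | ι v => exact h v
  | mul x y hx hy => rw [map_mul]; exact hx.mul_right hy
  | add x y hx hy => rw [map_add]; exact hx.add_right hy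

variable (R) in
/-- The hyperbolic plane, in isotropic coordinates: the form `(x, y) ↦ x * y` on `R × R`. -/
def hyperbolicPlane : QuadraticForm R (R × R) :=
  linMulLin (LinearMap.fst R R R) (LinearMap.snd R R R)

@[simp]
theorem hyperbolicPlane_apply (p : R × R) : hyperbolicPlane R p = p.1 * p.2 := rfl

namespace hyperbolicPlane

variable (Q : QuadraticForm R M)

theorem isHyperbolicPair_ι :
    IsHyperbolicPair (ι (Q.prod (hyperbolicPlane R)) (0, 1, 0))
      (ι (Q.prod (hyperbolicPlane R)) (0, 0, 1)) where
  left_mul_self := by simp [ι_sq_scalar]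
  right_mul_self := by simp [ι_sq_scalar]
  mul_add_mul_swap := by simp [ι_mul_ι_add_swap, polar]

theorem ι_inr_mul_ι_inl (v : M) (p : R × R) :
    ι (Q.prod (hyperbolicPlane R)) (0, p) * ι (Q.prod (hyperbolicPlane R)) (v, 0) =
      -(ι (Q.prod (hyperbolicPlane R)) (v, 0) * ι (Q.prod (hyperbolicPlane R)) (0, p)) :=
  ι_mul_ι_comm_of_isOrtho (IsOrtho.inr_inl v p)

theorem ι_mk (v : M) (x y : R) :
    ι (Q.prod (hyperbolicPlane R)) (v, x, y) =
      ι (Q.prod (hyperbolicPlane R)) (v, 0) + x • ι (Q.prod (hyperbolicPlane R)) (0, 1, 0) +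
        y • ι (Q.prod (hyperbolicPlane R)) (0, 0, 1) := by
  simp [← map_smul, ← map_add]

/-- The element `g = ef - fe` of `Cl(Q ⊥ H)`, for the isotropic generators `e`, `f` of `H`. -/
def grading : CliffordAlgebra (Q.prod (hyperbolicPlane R)) :=
  ι _ (0, 1, 0) * ι _ (0, 0, 1) - ι _ (0, 0, 1) * ι _ (0, 1, 0)

theorem grading_mul_self : grading Q * grading Q = 1 :=
  (isHyperbolicPair_ι Q).sub_mul_self

theorem commute_grading_ι_inl (v : M) : Commute (grading Q) (ι _ (v, 0)) := by
  have even (p q : R × R) :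
      Commute (ι (Q.prod (hyperbolicPlane R)) (0, p) * ι _ (0, q)) (ι _ (v, 0)) := by
    rw [Commute, SemiconjBy, mul_assoc, ι_inr_mul_ι_inl, mul_neg, ← mul_assoc, ι_inr_mul_ι_inl,
      neg_mul, neg_neg, mul_assoc]
  exact (even _ _).sub_left (even _ _)

/-- The embedding of `Cl(Q)` in `Cl(Q ⊥ H)` given on vectors by `v ↦ v g`, where `g = ef - fe`.
Its image, unlike that of `v ↦ v`, commutes with `e` and `f`. -/
def twistedEmbedding : CliffordAlgebra Q →ₐ[R] CliffordAlgebra (Q.prod (hyperbolicPlane R)) :=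
  lift Q ⟨LinearMap.mulRight R (grading Q) ∘ₗ ι _ ∘ₗ LinearMap.inl R M (R × R), fun v =>
    calc ι _ (v, 0) * grading Q * (ι _ (v, 0) * grading Q)
        = ι _ (v, 0) * ι _ (v, 0) := by
          rw [mul_assoc, ← mul_assoc (grading Q), (commute_grading_ι_inl Q v).eq, mul_assoc,
            grading_mul_self, mul_one]
      _ = algebraMap R _ (Q v) := by simp [ι_sq_scalar]⟩

theorem twistedEmbedding_ι (v : M) : twistedEmbedding Q (ι Q v) = ι _ (v, 0) * grading Q :=
  lift_ι_apply _ _ v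

theorem commute_left_twistedEmbedding (c : CliffordAlgebra Q) :
    Commute (ι _ (0, 1, 0)) (twistedEmbedding Q c) :=
  commute_algHom_of_forall_ι _ (fun v => by
    rw [twistedEmbedding_ι]
    exact (isHyperbolicPair_ι Q).commute_left_mul_sub (ι_inr_mul_ι_inl Q v _)) c

theorem commute_right_twistedEmbedding (c : CliffordAlgebra Q) :
    Commute (ι _ (0, 0, 1)) (twistedEmbedding Q c) :=
  commute_algHom_of_forall_ι _ (fun v => by
    rw [twistedEmbedding_ι]
    exact (isHyperbolicPair_ι Q).commute_right_mul_sub (ι_inr_mul_ι_inl Q v _)) c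

/-- The algebra map `M₂(Cl Q) → Cl(Q ⊥ H)` which is the twisted embedding on scalar matrices and
sends the off-diagonal matrix units to `e` and `f`. -/
def ofMatrix :
    Matrix (Fin 2) (Fin 2) (CliffordAlgebra Q) →ₐ[R] CliffordAlgebra (Q.prod (hyperbolicPlane R)) :=
  (isHyperbolicPair_ι Q).matrixLift (twistedEmbedding Q) (commute_left_twistedEmbedding Q)
    (commute_right_twistedEmbedding Q)

/-- The vectors of `Q ⊥ H` as `2 × 2` matrices over `Cl(Q)`. -/
def vectorMatrix : M × R × R →ₗ[R] Matrix (Fin 2) (Fin 2) (CliffordAlgebra Q) where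
  toFun p := !![ι Q p.1, algebraMap R _ p.2.1; algebraMap R _ p.2.2, -ι Q p.1]
  map_add' p q := by simp [add_comm]
  map_smul' r p := by simp [Algebra.algebraMap_eq_smul_one, smul_smul]

theorem vectorMatrix_mul_self (p : M × R × R) :
    vectorMatrix Q p * vectorMatrix Q p =
      algebraMap R _ (Q.prod (hyperbolicPlane R) p) := by
  obtain ⟨v, x, y⟩ := p
  simp [vectorMatrix, Algebra.algebraMap_eq_smul_one, ι_sq_scalar, Matrix.one_fin_two, add_smul,
    smul_smul, mul_comm, add_comm]

/-- The algebra map `Cl(Q ⊥ H) → M₂(Cl Q)` extending `vectorMatrix`. -/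
def toMatrix :
    CliffordAlgebra (Q.prod (hyperbolicPlane R)) →ₐ[R] Matrix (Fin 2) (Fin 2) (CliffordAlgebra Q) :=
  lift _ ⟨vectorMatrix Q, vectorMatrix_mul_self Q⟩

theorem toMatrix_ι (v : M) (x y : R) :
    toMatrix Q (ι _ (v, x, y)) = !![ι Q v, algebraMap R _ x; algebraMap R _ y, -ι Q v] :=
  lift_ι_apply _ _ _

theorem toMatrix_twistedEmbedding (c : CliffordAlgebra Q) :
    toMatrix Q (twistedEmbedding Q c) = !![c, 0; 0, c] := by
  induction c using CliffordAlgebra.induction with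
  | algebraMap r =>
    rw [AlgHom.commutes, AlgHom.commutes]
    ext i j
    fin_cases i <;> fin_cases j <;> simp [Matrix.algebraMap_matrix_apply]
  | ι v =>
    rw [twistedEmbedding_ι, grading, ← Prod.mk_zero_zero]
    simp [toMatrix_ι]
  | mul x y hx hy => simp [hx, hy]
  | add x y hx hy => simp [hx, hy]

theorem ofMatrix_comp_toMatrix : (ofMatrix Q).comp (toMatrix Q) = AlgHom.id R _ := by
  refine hom_ext (LinearMap.ext fun ⟨v, x, y⟩ => ?_)
  calc ofMatrix Q (toMatrix Q (ι _ (v, x, y)))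
      = ι _ (v, 0) * (grading Q * grading Q) + x • ι _ (0, 1, 0) + y • ι _ (0, 0, 1) := by
        nth_rw 2 [grading]
        simp only [toMatrix_ι, ofMatrix, IsHyperbolicPair.matrixLift_apply, Matrix.of_apply,
          Matrix.cons_val', Matrix.cons_val_zero, Matrix.cons_val_one, Matrix.cons_val_fin_one,
          AlgHom.commutes, map_neg, twistedEmbedding_ι, Algebra.smul_def, neg_mul, mul_sub,
          mul_assoc]
        abel
    _ = ι _ (v, x, y) := by rw [grading_mul_self, mul_one, ← ι_mk]

theorem toMatrix_comp_ofMatrix : (toMatrix Q).comp (ofMatrix Q) = AlgHom.id R _ := by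
  ext1 N
  rw [AlgHom.comp_apply, ofMatrix, IsHyperbolicPair.matrixLift_apply]
  simp only [map_add, map_mul, toMatrix_twistedEmbedding, toMatrix_ι]
  ext i j
  fin_cases i <;> fin_cases j <;> simp

/-- Periodicity for one hyperbolic plane: `Cl(Q ⊥ H) ≅ M₂(Cl Q)`. -/
def cliffordAlgebraEquivMatrix :
    CliffordAlgebra (Q.prod (hyperbolicPlane R)) ≃ₐ[R] Matrix (Fin 2) (Fin 2) (CliffordAlgebra Q) :=
  AlgEquiv.ofAlgHom (toMatrix Q) (ofMatrix Q) (toMatrix_comp_ofMatrix Q) (ofMatrix_comp_toMatrix Q)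

end hyperbolicPlane

end CliffordAlgebra

section Isometries

variable {R M N : Type*} [CommRing R] [AddCommGroup M] [Module R M] [AddCommGroup N] [Module R N]

/-- An orthogonal sum over an empty index type is zero: `Q ⊥ 0 ≅ Q`. -/
def prodPiIsEmptyIsometryEquiv (Q : QuadraticForm R M) (Q' : QuadraticForm R N) (κ : Type*)
    [Fintype κ] [IsEmpty κ] : (Q.prod (pi fun _ : κ => Q')).IsometryEquiv Q where
  toLinearEquiv := LinearEquiv.prodUnique
  map_app' p := by simp

/-- Splitting off the last summand: `Q ⊥ (m + 1)Q' ≅ (Q ⊥ mQ') ⊥ Q'`. -/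
def prodPiSuccIsometryEquiv (Q : QuadraticForm R M) (Q' : QuadraticForm R N) (m : ℕ) :
    (Q.prod (pi fun _ : Fin (m + 1) => Q')).IsometryEquiv
      ((Q.prod (pi fun _ : Fin m => Q')).prod Q') where
  toFun p := ((p.1, Fin.init p.2), p.2 (Fin.last m))
  invFun q := (q.1.1, Fin.snoc q.1.2 q.2)
  left_inv p := by simp
  right_inv q := by simp
  map_add' p q := rfl
  map_smul' r p := rfl
  map_app' p := by simp [Fin.sum_univ_castSucc, Fin.init, add_assoc]

variable {α β : Type*} [Fintype α] [Fintype β]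

/-- Relabelling the coordinates of a weighted sum of squares. -/
def weightedSumSquaresReindex (e : α ≃ β) (w : β → R) :
    (weightedSumSquares R w).IsometryEquiv (weightedSumSquares R (w ∘ e)) where
  toLinearEquiv := LinearEquiv.funCongrLeft R R e
  map_app' v := by
    simpa [LinearMap.funLeft_apply] using e.sum_comp fun i => w i • (v i * v i)

/-- A weighted sum of squares over a disjoint union of index types is an orthogonal sum. -/
def weightedSumSquaresSumElim (w₁ : α → R) (w₂ : β → R) :
    (weightedSumSquares R (Sum.elim w₁ w₂)).IsometryEquiv
      ((weightedSumSquares R w₁).prod (weightedSumSquares R w₂)) where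
  toLinearEquiv := LinearEquiv.sumArrowLequivProdArrow α β R R
  map_app' v := by simp

/-- The coordinates `y + x`, `y - x` identify `-x² + y²` with the hyperbolic plane. -/
def weightedSumSquaresNegOneProdOne [Invertible (2 : R)] :
    ((weightedSumSquares R fun _ : α => (-1 : R)).prod
      (weightedSumSquares R fun _ : α => (1 : R))).IsometryEquiv
      (pi fun _ : α => hyperbolicPlane R) where
  toFun p i := (p.2 i + p.1 i, p.2 i - p.1 i)
  invFun q := (fun i => ⅟2 * ((q i).1 - (q i).2), fun i => ⅟2 * ((q i).1 + (q i).2))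
  left_inv p := by
    ext i
    · linear_combination p.1 i * invOf_mul_self (2 : R)
    · linear_combination p.2 i * invOf_mul_self (2 : R)
  right_inv q := by
    ext i
    · linear_combination (q i).1 * invOf_mul_self (2 : R)
    · linear_combination (q i).2 * invOf_mul_self (2 : R)
  map_add' p q := by ext <;> simp <;> ring
  map_smul' r p := by ext <;> simp <;> ring
  map_app' p := by
    simp only [pi_apply, hyperbolicPlane_apply, prod_apply, weightedSumSquares_apply, smul_eq_mul,
      ← Finset.sum_add_distrib]
    exact Finset.sum_congr rfl fun i _ => by ring

end Isometries

section SignWeights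

/-- The indices of `w(l + m, n + 2m)` as those of `w(l, n)` (the middle block of length `n`)
together with `m` further negative ones (the first block) and `m` positive ones (the last block). -/
def signIndexEquiv (n m : ℕ) : Fin n ⊕ (Fin m ⊕ Fin m) ≃ Fin (n + 2 * m) :=
  (Equiv.sumAssoc _ _ _).symm.trans <|
    (((Equiv.sumComm _ _).trans finSumFinEquiv).sumCongr (Equiv.refl _)).trans <|
      finSumFinEquiv.trans <| finCongr (by ring : m + n + m = n + 2 * m)

theorem signWeights_comp_signIndexEquiv {n l : ℕ} (m : ℕ) (hl : l ≤ n) :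
    signWeights (l + m) (n + 2 * m) ∘ signIndexEquiv n m =
      Sum.elim (signWeights l n) (Sum.elim (fun _ => -1) fun _ => 1) := by
  funext i
  rcases i with i | i | i
  · simp [signWeights, signIndexEquiv, add_comm l m]
  · have : (i : ℕ) < l + m := by omega
    simp [signWeights, signIndexEquiv, this]
  · have : ¬ m + n + i < l + m := by omega
    simp [signWeights, signIndexEquiv, this]

/-- Passing from `w(l, n)` to `w(l + m, n + 2m)` adds `m` hyperbolic planes. -/
noncomputable def signWeightsIsometryEquiv {n l : ℕ} (m : ℕ) (hl : l ≤ n) :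
    (weightedSumSquares ℝ (signWeights (l + m) (n + 2 * m))).IsometryEquiv
      ((weightedSumSquares ℝ (signWeights l n)).prod (pi fun _ : Fin m => hyperbolicPlane ℝ)) :=
  (weightedSumSquaresReindex (signIndexEquiv n m) _).trans <|
    (QuadraticForm.weightedSumSquaresCongr (signWeights_comp_signIndexEquiv m hl)).trans <|
      (weightedSumSquaresSumElim _ _).trans <|
        (QuadraticMap.IsometryEquiv.refl _).prod <|
          (weightedSumSquaresSumElim _ _).trans weightedSumSquaresNegOneProdOne

end SignWeights

theorem cliffordAlgebra_signWeights_add_two_mul_isomorphic_matrix_general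
    {R M : Type*} [CommRing R] [AddCommGroup M] [Module R M] (Q : QuadraticForm R M) (m : ℕ) :
    Nonempty
      (CliffordAlgebra (Q.prod (pi fun _ : Fin m => hyperbolicPlane R))
        ≃ₐ[R] Matrix (Fin (2 ^ m)) (Fin (2 ^ m)) (CliffordAlgebra Q)) := by
  induction m with
  | zero =>
    exact ⟨(equivOfIsometry (prodPiIsEmptyIsometryEquiv Q _ _)).trans <|
      (Matrix.uniqueAlgEquiv (m := Unit)).symm.trans <|
      Matrix.reindexAlgEquiv R _ finOneEquiv.symm⟩
  | succ m ih =>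
    obtain ⟨e⟩ := ih
    exact ⟨(equivOfIsometry (prodPiSuccIsometryEquiv Q _ m)).trans <|
      (hyperbolicPlane.cliffordAlgebraEquivMatrix _).trans <|
      e.mapMatrix.trans <| (Matrix.compAlgEquiv _ _ _ _).trans <|
      Matrix.reindexAlgEquiv R _ <| (Equiv.prodComm _ _).trans finProdFinEquiv⟩

/-- Paper's Theorem 2 (for `K = ℝ`): `^{l+m}K_{n+2m} ≅ M_{2^m}(^{l}K_n)`. -/
theorem cliffordAlgebra_signWeights_add_two_mul_isomorphic_matrix (n m l : ℕ) (hl : l ≤ n) :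
    Nonempty
      (CliffordAlgebra (QuadraticMap.weightedSumSquares ℝ (signWeights (l + m) (n + 2 * m)))
        ≃ₐ[ℝ] Matrix (Fin (2 ^ m)) (Fin (2 ^ m))
          (CliffordAlgebra (QuadraticMap.weightedSumSquares ℝ (signWeights l n)))) :=
  (cliffordAlgebra_signWeights_add_two_mul_isomorphic_matrix_general _ m).map
    (equivOfIsometry (signWeightsIsometryEquiv m hl)).trans
end

section
/- For every natural number ν, the complex Clifford algebra Cℂ(2ν+1) of odd dimensionality is isomorphic as a ℂ-algebra to the direct sum (product algebra) Cℂ(2ν) × Cℂ(2ν) of two copies of Cℂ(2ν). (Equation (16) of the paper; the decomposition is realized by the mutually orthogonal central idempotents ε = (1 ± ω)/2 built from the volume element.) -/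
/-- `Cℂ(n)`: the Clifford algebra over `ℂ` of the sum-of-squares form on `Fin n → ℂ`. -/
noncomputable abbrev ComplexClifford (n : ℕ) :=
  CliffordAlgebra (QuadraticMap.weightedSumSquares ℂ (fun _ : Fin n => (1 : ℂ)))

/-!
Let `ω` be the suitably normalised product of an orthogonal basis of an even-dimensional quadratic
space `(M, Q)`. It anticommutes with every vector, so adjoining to `M` an orthogonal vector `e` with
`e ^ 2 = ω ^ 2` gives two retractions of the larger Clifford algebra onto that of `Q`, one sending
`e` to `ω` and one sending `e` to `-ω`. Together they are an isomorphism onto the product: the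
volume element `Ω = ω * e / ω ^ 2` is central with `Ω ^ 2 = 1`, and the idempotents `(1 ± Ω) / 2`
split the algebra into the two factors.
-/

section Idempotent

variable {R A₁ A₂ B : Type*} [CommSemiring R] [Semiring A₁] [Semiring A₂] [Ring B]
  [Algebra R A₁] [Algebra R A₂] [Algebra R B]

/-- The homomorphism `(x, y) ↦ f x * p + g y * (1 - p)` out of a product of algebras, for an
idempotent `p` commuting with the ranges of `f` and `g`. -/
def prodAlgHomOfIdempotent (f : A₁ →ₐ[R] B) (g : A₂ →ₐ[R] B) {p : B} (hp : IsIdempotentElem p)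
    (hf : ∀ x, Commute p (f x)) (hg : ∀ y, Commute p (g y)) : A₁ × A₂ →ₐ[R] B :=
  AlgHom.ofLinearMap
    ((LinearMap.mulRight R p ∘ₗ f.toLinearMap).coprod
      (LinearMap.mulRight R (1 - p) ∘ₗ g.toLinearMap))
    (by simp)
    (by
      rintro ⟨x₁, y₁⟩ ⟨x₂, y₂⟩
      have hf₂ := (hf x₂).eq
      have hg₂ := ((Commute.one_left (g y₂)).sub_left (hg y₂)).eq
      have hfg : p * g y₂ * (1 - p) = 0 := by
        rw [(hg y₂).eq, mul_assoc, hp.mul_one_sub_self, mul_zero]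
      have hgf : (1 - p) * f x₂ * p = 0 := by
        rw [mul_assoc, ← hf₂, ← mul_assoc, hp.one_sub_mul_self, zero_mul]
      simp only [LinearMap.coprod_apply, LinearMap.comp_apply, LinearMap.mulRight_apply,
        AlgHom.toLinearMap_apply, Prod.mk_mul_mk, map_mul]
      calc
        f x₁ * f x₂ * p + g y₁ * g y₂ * (1 - p)
          = f x₁ * f x₂ * (p * p) + g y₁ * g y₂ * ((1 - p) * (1 - p)) := by
            rw [hp.eq, hp.one_sub.eq]
        _ = f x₁ * (p * f x₂ * p) + f x₁ * (p * g y₂ * (1 - p))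
            + (g y₁ * ((1 - p) * f x₂ * p) + g y₁ * ((1 - p) * g y₂ * (1 - p))) := by
            rw [hfg, hgf, hf₂, hg₂]
            simp only [mul_zero, add_zero, zero_add, mul_assoc]
        _ = (f x₁ * p + g y₁ * (1 - p)) * (f x₂ * p + g y₂ * (1 - p)) := by
            simp only [add_mul, mul_add, mul_assoc, add_add_add_comm])

theorem prodAlgHomOfIdempotent_apply (f : A₁ →ₐ[R] B) (g : A₂ →ₐ[R] B) {p : B}
    (hp : IsIdempotentElem p) (hf : ∀ x, Commute p (f x)) (hg : ∀ y, Commute p (g y)) (x : A₁)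
    (y : A₂) : prodAlgHomOfIdempotent f g hp hf hg (x, y) = f x * p + g y * (1 - p) :=
  rfl

theorem isIdempotentElem_invOf_two_smul_one_add [Invertible (2 : R)] {z : B} (hz : z * z = 1) :
    IsIdempotentElem (⅟(2 : R) • (1 + z)) := by
  have h : (1 + z) * (1 + z) = (2 : R) • (1 + z) := by
    rw [add_mul, one_mul, mul_add, hz, mul_one, two_smul, add_comm z 1]
  rw [IsIdempotentElem, smul_mul_smul_comm, h, smul_smul, mul_assoc, invOf_mul_self, mul_one]

end Idempotent

open CliffordAlgebra in
theorem semiconjBy_map_involute {R M B : Type*} [CommRing R] [AddCommGroup M] [Module R M]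
    {Q : QuadraticForm R M} [Ring B] [Algebra R B] (φ : CliffordAlgebra Q →ₐ[R] B) {b : B}
    (h : ∀ m, SemiconjBy b (φ (ι Q m)) (-φ (ι Q m))) (x : CliffordAlgebra Q) :
    SemiconjBy b (φ x) (φ (involute x)) := by
  induction x using CliffordAlgebra.induction with
  | algebraMap r => simpa using (Algebra.commute_algebraMap_right r b).semiconjBy
  | ι m => simpa using h m
  | mul x y hx hy => simpa using hx.mul_right hy
  | add x y hx hy => simpa using hx.add_right hy

theorem neg_one_pow_choose_two_two_mul {R : Type*} [CommRing R] (n : ℕ) :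
    (-1 : R) ^ (2 * n).choose 2 = (-1) ^ n := by
  have h : (2 * n).choose 2 = n + 2 * (n * (n - 1)) := by
    rw [Nat.choose_two_right]
    cases n <;> grind
  simp [h, pow_add, pow_mul]

section Volume

open CliffordAlgebra

variable {R M : Type*} [CommRing R] [AddCommGroup M] [Module R M] {Q : QuadraticForm R M}

theorem semiconjBy_ι_prod_map_ι {m : M} {l : List M} (h : ∀ x ∈ l, Q.IsOrtho m x) :
    SemiconjBy (ι Q m) (l.map (ι Q)).prod (involute (l.map (ι Q)).prod) := by
  induction l with
  | nil => simp
  | cons x l ih =>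
    rw [List.forall_mem_cons] at h
    have hx : SemiconjBy (ι Q m) (ι Q x) (involute (ι Q x)) := by
      rw [SemiconjBy, involute_ι, neg_mul, ι_mul_ι_comm_of_isOrtho h.1]
    rw [List.map_cons, List.prod_cons, map_mul]
    exact hx.mul_right (ih h.2)

theorem semiconjBy_ι_prod_map_ι_of_mem {m : M} {l : List M} (hl : l.Pairwise Q.IsOrtho)
    (hm : m ∈ l) : SemiconjBy (ι Q m) (l.map (ι Q)).prod (-involute (l.map (ι Q)).prod) := by
  induction l with
  | nil => simp at hm
  | cons x l ih =>
    rw [List.pairwise_cons] at hl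
    rw [List.map_cons, List.prod_cons, map_mul, involute_ι, neg_mul, neg_neg]
    obtain rfl | hm := List.mem_cons.mp hm
    · exact (Commute.refl (ι Q m)).semiconjBy.mul_right (semiconjBy_ι_prod_map_ι hl.1)
    · have hx : SemiconjBy (ι Q m) (ι Q x) (-ι Q x) := by
        rw [SemiconjBy, neg_mul, ι_mul_ι_comm_of_isOrtho (hl.1 m hm).symm]
      simpa using hx.mul_right (ih hl.2 hm)

theorem prod_map_ι_mul_self {l : List M} (hl : l.Pairwise Q.IsOrtho) :
    (l.map (ι Q)).prod * (l.map (ι Q)).prod =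
      algebraMap R _ ((-1) ^ l.length.choose 2 * (l.map Q).prod) := by
  induction l with
  | nil => simp
  | cons x l ih =>
    rw [List.pairwise_cons] at hl
    have hx := (semiconjBy_ι_prod_map_ι hl.1).eq
    rw [involute_prod_map_ι] at hx
    rw [List.map_cons, List.prod_cons]
    set P := (l.map (ι Q)).prod
    calc
      ι Q x * P * (ι Q x * P) = (-1 : R) ^ l.length • P * ι Q x * (ι Q x * P) := congr($hx * _)
      _ = (-1 : R) ^ l.length • (P * (ι Q x * ι Q x) * P) := by
        simp only [smul_mul_assoc, mul_assoc]
      _ = algebraMap R _ ((-1) ^ l.length * Q x) * (P * P) := by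
        rw [ι_sq_scalar, ← Algebra.commutes, mul_assoc, map_mul, mul_assoc, Algebra.smul_def]
      _ = _ := by
        rw [ih hl.2, ← map_mul, List.length_cons, Nat.choose_succ_succ', Nat.choose_one_right,
          List.map_cons, List.prod_cons, pow_add, mul_mul_mul_comm]

end Volume

/-- A chirality element of a quadratic form: an element of its Clifford algebra with scalar square
`a` that anticommutes with every vector. -/
structure IsChirality {R M : Type*} [CommRing R] [AddCommGroup M] [Module R M]
    (Q : QuadraticForm R M) (a : R) (ω : CliffordAlgebra Q) : Prop where
  mul_self : ω * ω = algebraMap R (CliffordAlgebra Q) a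
  semiconjBy_ι (m : M) :
    SemiconjBy ω (CliffordAlgebra.ι Q m) (-CliffordAlgebra.ι Q m)

section AdjoinLine

open CliffordAlgebra

variable {R M : Type*} [CommRing R] [AddCommGroup M] [Module R M] (a : R) (Q : QuadraticForm R M)

/-- The orthogonal sum `⟨a⟩ ⊥ Q` of `Q` with the one-dimensional form `r ↦ a * r ^ 2`. -/
abbrev adjoinLine : QuadraticForm R (R × M) :=
  QuadraticMap.prod (a • QuadraticMap.sq) Q

/-- The generator of the Clifford algebra of `⟨a⟩ ⊥ Q` contributed by the summand `⟨a⟩`. -/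
def adjoinedVector : CliffordAlgebra (adjoinLine a Q) :=
  ι _ (1, 0)

/-- The homomorphism of Clifford algebras induced by the inclusion of `Q` into `⟨a⟩ ⊥ Q`. -/
def adjoinLineMap : CliffordAlgebra Q →ₐ[R] CliffordAlgebra (adjoinLine a Q) :=
  map (QuadraticMap.Isometry.inr (a • QuadraticMap.sq) Q)

variable {Q}

/-- The normalised volume element of `⟨a⟩ ⊥ Q` determined by a chirality element `ω` of `Q` with
square `a`; the scalar makes its square `1`. -/
def centralVolume [Invertible a] (ω : CliffordAlgebra Q) :
    CliffordAlgebra (adjoinLine a Q) :=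
  ⅟a • (adjoinLineMap a Q ω * adjoinedVector a Q)

/-- The idempotent `(1 + Ω) / 2` attached to the central volume element `Ω`. -/
def centralIdempotent [Invertible a] [Invertible (2 : R)] (ω : CliffordAlgebra Q) :
    CliffordAlgebra (adjoinLine a Q) :=
  ⅟(2 : R) • (1 + centralVolume a ω)

variable {a}

theorem centralIdempotent_sub_one_sub [Invertible a] [Invertible (2 : R)] (ω : CliffordAlgebra Q) :
    centralIdempotent a ω - (1 - centralIdempotent a ω) = centralVolume a ω := by
  rw [← sub_add, sub_add_eq_add_sub, centralIdempotent, ← add_smul, invOf_two_add_invOf_two,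
    one_smul, add_sub_cancel_left]

theorem adjoinLineMap_ι (m : M) : adjoinLineMap a Q (ι Q m) = ι (adjoinLine a Q) (0, m) :=
  map_apply_ι _ m

theorem ι_adjoinLine (r : R) (m : M) :
    ι (adjoinLine a Q) (r, m) = r • adjoinedVector a Q + adjoinLineMap a Q (ι Q m) := by
  rw [adjoinLineMap_ι, adjoinedVector, ← map_smul, ← map_add]
  simp

theorem adjoinedVector_mul_self :
    adjoinedVector a Q * adjoinedVector a Q = algebraMap R _ a := by
  simp [adjoinedVector]

theorem semiconjBy_adjoinedVector (x : CliffordAlgebra Q) :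
    SemiconjBy (adjoinedVector a Q) (adjoinLineMap a Q x) (adjoinLineMap a Q (involute x)) := by
  refine semiconjBy_map_involute _ (fun m ↦ ?_) x
  rw [SemiconjBy, neg_mul, adjoinLineMap_ι]
  exact ι_mul_ι_comm_of_isOrtho (.inl_inr _ _)

end AdjoinLine

namespace IsChirality

open CliffordAlgebra

variable {R M : Type*} [CommRing R] [AddCommGroup M] [Module R M] {Q : QuadraticForm R M} {a : R}
  {ω : CliffordAlgebra Q}

theorem of_orthogonal_list {l : List M} {n : ℕ} {c : R} (hl : l.Pairwise Q.IsOrtho)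
    (hspan : Submodule.span R {m | m ∈ l} = ⊤) (hlen : l.length = 2 * n)
    (hc : c ^ 2 * ((-1) ^ n * (l.map Q).prod) = a) :
    IsChirality Q a (c • (l.map (ι Q)).prod) where
  mul_self := by
    have hsign : (-1 : R) ^ l.length.choose 2 = (-1) ^ n := by
      rw [hlen]
      exact neg_one_pow_choose_two_two_mul n
    rw [smul_mul_smul_comm, prod_map_ι_mul_self hl, hsign, Algebra.smul_def, ← map_mul, ← sq, hc]
  semiconjBy_ι m := by
    suffices SemiconjBy (ι Q m) (l.map (ι Q)).prod (-(l.map (ι Q)).prod) by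
      refine SemiconjBy.smul_left ?_ c
      rw [SemiconjBy, neg_mul, this.eq, neg_mul, neg_neg]
    have hm : m ∈ Submodule.span R {x | x ∈ l} := hspan ▸ Submodule.mem_top
    induction hm using Submodule.span_induction with
    | mem x hx =>
      simpa [involute_prod_map_ι, hlen] using semiconjBy_ι_prod_map_ι_of_mem hl hx
    | zero => simp
    | add x y _ _ hx hy => simpa using hx.add_left hy
    | smul r x _ hx => simpa using hx.smul_left r

theorem neg (h : IsChirality Q a ω) : IsChirality Q a (-ω) where
  mul_self := by rw [neg_mul_neg, h.mul_self]
  semiconjBy_ι m := (h.semiconjBy_ι m).neg_left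

theorem involute_eq [Invertible a] (h : IsChirality Q a ω) : involute ω = ω := by
  -- Moving `ω` past itself turns `ω * ω` into `involute ω * ω`, and `ω` is invertible.
  have hcomm : ω * ω = involute ω * ω :=
    (semiconjBy_map_involute (AlgHom.id R _) h.semiconjBy_ι ω).eq
  have hcancel := congr($hcomm * ω)
  rw [mul_assoc, mul_assoc, h.mul_self, ← Algebra.commutes, ← Algebra.commutes,
    ← Algebra.smul_def, ← Algebra.smul_def] at hcancel
  simpa using congr(⅟a • $hcancel.symm)

/-- The homomorphism onto the Clifford algebra of `Q` that fixes the vectors of `Q` and sends the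
adjoined vector to `ω`. -/
def retraction (h : IsChirality Q a ω) :
    CliffordAlgebra (adjoinLine a Q) →ₐ[R] CliffordAlgebra Q :=
  lift _ ⟨(LinearMap.toSpanSingleton R _ ω).coprod (ι Q), by
    rintro ⟨r, m⟩
    rw [LinearMap.coprod_apply, LinearMap.toSpanSingleton_apply]
    calc
      (r • ω + ι Q m) * (r • ω + ι Q m)
        = r • r • (ω * ω) + r • (ω * ι Q m + ι Q m * ω) + ι Q m * ι Q m := by
          simp only [mul_add, add_mul, smul_mul_assoc, mul_smul_comm, smul_add]
          abel
      _ = algebraMap R _ (adjoinLine a Q (r, m)) := by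
          rw [(h.semiconjBy_ι m).eq, neg_mul, neg_add_cancel, h.mul_self, ι_sq_scalar]
          simp [Algebra.smul_def, mul_assoc, mul_comm a]⟩

theorem retraction_ι (h : IsChirality Q a ω) (r : R) (m : M) :
    h.retraction (ι (adjoinLine a Q) (r, m)) = r • ω + ι Q m :=
  lift_ι_apply _ _ _

theorem retraction_adjoinedVector (h : IsChirality Q a ω) :
    h.retraction (adjoinedVector a Q) = ω := by
  rw [adjoinedVector, retraction_ι, one_smul, map_zero, add_zero]

theorem retraction_adjoinLineMap (h : IsChirality Q a ω) (x : CliffordAlgebra Q) :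
    h.retraction (adjoinLineMap a Q x) = x := by
  have hcomp : h.retraction.comp (adjoinLineMap a Q) = AlgHom.id R _ := by
    ext m
    simp [adjoinLineMap_ι, retraction_ι]
  exact congr($hcomp x)

theorem retraction_centralVolume [Invertible a] (h : IsChirality Q a ω) (η : CliffordAlgebra Q) :
    h.retraction (centralVolume a η) = ⅟a • (η * ω) := by
  rw [centralVolume, map_smul, map_mul, retraction_adjoinLineMap, retraction_adjoinedVector]

theorem commute_centralVolume [Invertible a] (h : IsChirality Q a ω) (x : CliffordAlgebra Q) :
    Commute (centralVolume a ω) (adjoinLineMap a Q x) := by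
  have hω : SemiconjBy (adjoinLineMap a Q ω) (adjoinLineMap a Q (involute x))
      (adjoinLineMap a Q (involute (involute x))) :=
    (semiconjBy_map_involute (AlgHom.id R _) h.semiconjBy_ι _).map (adjoinLineMap a Q)
  rw [involute_involute] at hω
  exact (hω.mul_left (semiconjBy_adjoinedVector x)).smul_left ⅟a

theorem adjoinLineMap_mul_centralVolume [Invertible a] (h : IsChirality Q a ω) :
    adjoinLineMap a Q ω * centralVolume a ω = adjoinedVector a Q := by
  rw [centralVolume, mul_smul_comm, ← mul_assoc, ← map_mul, h.mul_self, AlgHom.commutes,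
    ← Algebra.smul_def, invOf_smul_smul]

theorem centralVolume_mul_self [Invertible a] (h : IsChirality Q a ω) :
    centralVolume a ω * centralVolume a ω = 1 := by
  have hswap : adjoinLineMap a Q ω * adjoinedVector a Q =
      adjoinedVector a Q * adjoinLineMap a Q ω := by
    rw [(semiconjBy_adjoinedVector ω).eq, h.involute_eq]
  calc
    centralVolume a ω * centralVolume a ω
      = ⅟a • (adjoinedVector a Q * (adjoinLineMap a Q ω * centralVolume a ω)) := by
        rw [← mul_assoc, ← hswap, ← smul_mul_assoc, ← centralVolume]
    _ = 1 := by
        rw [h.adjoinLineMap_mul_centralVolume, adjoinedVector_mul_self,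
          Algebra.algebraMap_eq_smul_one, invOf_smul_smul]

variable [Invertible a] [Invertible (2 : R)]

theorem commute_centralIdempotent (h : IsChirality Q a ω) (x : CliffordAlgebra Q) :
    Commute (centralIdempotent a ω) (adjoinLineMap a Q x) :=
  ((Commute.one_left _).add_left (h.commute_centralVolume x)).smul_left _

theorem isIdempotentElem_centralIdempotent (h : IsChirality Q a ω) :
    IsIdempotentElem (centralIdempotent a ω) :=
  isIdempotentElem_invOf_two_smul_one_add h.centralVolume_mul_self

theorem retraction_centralIdempotent (h : IsChirality Q a ω) :
    h.retraction (centralIdempotent a ω) = 1 := by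
  rw [centralIdempotent, map_smul, map_add, map_one, retraction_centralVolume, h.mul_self,
    Algebra.algebraMap_eq_smul_one, invOf_smul_smul, smul_add, ← add_smul, invOf_two_add_invOf_two,
    one_smul]

theorem retraction_neg_centralIdempotent (h : IsChirality Q a ω) :
    h.neg.retraction (centralIdempotent a ω) = 0 := by
  rw [centralIdempotent, map_smul, map_add, map_one, retraction_centralVolume, mul_neg, h.mul_self,
    Algebra.algebraMap_eq_smul_one, smul_neg, invOf_smul_smul, add_neg_cancel, smul_zero]

/-- The homomorphism that embeds one factor along the idempotent `(1 + Ω) / 2` and the other along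
`(1 - Ω) / 2`. -/
def ofProd (h : IsChirality Q a ω) :
    CliffordAlgebra Q × CliffordAlgebra Q →ₐ[R] CliffordAlgebra (adjoinLine a Q) :=
  prodAlgHomOfIdempotent (adjoinLineMap a Q) (adjoinLineMap a Q)
    h.isIdempotentElem_centralIdempotent h.commute_centralIdempotent h.commute_centralIdempotent

theorem retraction_prod_comp_ofProd (h : IsChirality Q a ω) :
    (h.retraction.prod h.neg.retraction).comp h.ofProd = AlgHom.id R _ := by
  refine AlgHom.ext fun ⟨x, y⟩ ↦ ?_
  simp [ofProd, prodAlgHomOfIdempotent_apply, retraction_adjoinLineMap,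
    h.retraction_centralIdempotent, h.retraction_neg_centralIdempotent]

theorem ofProd_comp_retraction_prod (h : IsChirality Q a ω) :
    h.ofProd.comp (h.retraction.prod h.neg.retraction) = AlgHom.id R _ := by
  refine hom_ext (LinearMap.ext fun ⟨r, m⟩ ↦ ?_)
  set p := centralIdempotent a ω
  set j := adjoinLineMap a Q
  calc
    j (h.retraction (ι _ (r, m))) * p + j (h.neg.retraction (ι _ (r, m))) * (1 - p)
      = j (r • ω + ι Q m) * p + j (r • -ω + ι Q m) * (1 - p) := by
        rw [retraction_ι, retraction_ι]
    _ = r • (j ω * (p - (1 - p))) + j (ι Q m) := by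
        simp only [map_add, map_neg, map_smul, add_mul, neg_mul, mul_sub, mul_one, smul_mul_assoc,
          smul_sub, smul_neg]
        abel
    _ = ι (adjoinLine a Q) (r, m) := by
        rw [centralIdempotent_sub_one_sub, h.adjoinLineMap_mul_centralVolume, ι_adjoinLine]

/-- The splitting of the Clifford algebra of `⟨a⟩ ⊥ Q` defined by the retractions attached to the
chirality elements `ω` and `-ω`. -/
def cliffordEquivProd (h : IsChirality Q a ω) :
    CliffordAlgebra (adjoinLine a Q) ≃ₐ[R] CliffordAlgebra Q × CliffordAlgebra Q :=
  AlgEquiv.ofAlgHom (h.retraction.prod h.neg.retraction) h.ofProd h.retraction_prod_comp_ofProd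
    h.ofProd_comp_retraction_prod

end IsChirality

section WeightedSumSquares

open QuadraticMap

variable {R : Type*} [CommRing R]

/-- Splitting off the first coordinate of a diagonal quadratic form. -/
def weightedSumSquaresConsIsometryEquiv {n : ℕ} (w : Fin (n + 1) → R) :
    (adjoinLine (w 0) (weightedSumSquares R (Fin.tail w))).IsometryEquiv
      (weightedSumSquares R w) where
  toLinearEquiv := Fin.consLinearEquiv R fun _ ↦ R
  map_app' := by
    rintro ⟨r, v⟩
    simp [weightedSumSquares_apply, Fin.sum_univ_succ, Fin.tail]

theorem weightedSumSquares_single {n : ℕ} (w : Fin n → R) (i : Fin n) :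
    weightedSumSquares R w (Pi.single i 1) = w i := by
  simp [weightedSumSquares_apply, Pi.single_apply]

theorem isOrtho_weightedSumSquares_single {n : ℕ} (w : Fin n → R) {i j : Fin n} (h : i ≠ j) :
    (weightedSumSquares R w).IsOrtho (Pi.single i 1) (Pi.single j 1) := by
  rw [isOrtho_def]
  simp [weightedSumSquares_apply, mul_add, Finset.sum_add_distrib, Pi.single_apply, h, h.symm]

theorem exists_isChirality_weightedSumSquares {n : ℕ} (w : Fin (2 * n) → R) {a c : R}
    (hc : c ^ 2 * ((-1) ^ n * ∏ i, w i) = a) :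
    ∃ ω, IsChirality (weightedSumSquares R w) a ω := by
  have hspan : {v | v ∈ List.ofFn fun i : Fin (2 * n) ↦ (Pi.single i 1 : Fin (2 * n) → R)}
      = Set.range (Pi.basisFun R (Fin (2 * n))) := by
    ext v
    simp [List.mem_ofFn]
  refine ⟨_, .of_orthogonal_list (l := List.ofFn fun i ↦ Pi.single i 1) (n := n) (c := c)
    ?_ ?_ List.length_ofFn ?_⟩
  · exact List.pairwise_ofFn.mpr fun i j hij ↦ isOrtho_weightedSumSquares_single w hij.ne
  · rw [hspan, Module.Basis.span_eq]
  · rw [List.map_ofFn, List.prod_ofFn]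
    simp only [Function.comp_apply, weightedSumSquares_single, hc]

/-- The product `(-1) ^ ν * ∏ i, w i` is the signed discriminant of the form. -/
theorem complexClifford_odd_isomorphic_prod_general [Invertible (2 : R)] (ν : ℕ)
    (w : Fin (2 * ν + 1) → R) {u : R} (hu : u ^ 2 * ((-1) ^ ν * ∏ i, w i) = 1) :
    Nonempty (CliffordAlgebra (weightedSumSquares R w) ≃ₐ[R]
      CliffordAlgebra (weightedSumSquares R (Fin.tail w)) ×
        CliffordAlgebra (weightedSumSquares R (Fin.tail w))) := by
  have hu' : u ^ 2 * ((-1) ^ ν * (w 0 * ∏ i, Fin.tail w i)) = 1 := by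
    rwa [Fin.prod_univ_succ] at hu
  have hw : IsUnit (w 0) :=
    .of_mul_eq_one (u ^ 2 * ((-1) ^ ν * ∏ i, Fin.tail w i)) (by linear_combination hu')
  let _ : Invertible (w 0) := hw.invertible
  obtain ⟨ω, hω⟩ := exists_isChirality_weightedSumSquares (Fin.tail w) (a := w 0) (c := u * w 0)
    (by linear_combination w 0 * hu')
  exact ⟨(CliffordAlgebra.equivOfIsometry (weightedSumSquaresConsIsometryEquiv w)).symm.trans
    hω.cliffordEquivProd⟩

end WeightedSumSquares

/-- Eq. (16): `Cℂ(2ν+1) ≅ Cℂ(2ν) ⊕ Cℂ(2ν)`. -/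
theorem complexClifford_odd_isomorphic_prod (ν : ℕ) :
    Nonempty (ComplexClifford (2 * ν + 1) ≃ₐ[ℂ] ComplexClifford (2 * ν) × ComplexClifford (2 * ν)) :=
  complexClifford_odd_isomorphic_prod_general ν (fun _ ↦ (1 : ℂ)) (u := Complex.I ^ ν) <| by
    rw [Finset.prod_const_one, mul_one, pow_right_comm, Complex.I_sq, ← mul_pow, neg_mul_neg,
      mul_one, one_pow]
end

section
/- The real Clifford algebra Clℝ(w) with n = 3 and w identically +1 (the algebra R₃ with three generators each squaring to +1) is isomorphic as an ℝ-algebra to the algebra Matrix (Fin 2) (Fin 2) ℂ of 2 × 2 complex matrices, regarded as an ℝ-algebra. (The identity R₃ = C₂: R₃ is the algebra of complex quaternions, i.e. hyperbolic biquaternions.) -/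
/-!
Let `ω` be an even element of `Cl(Q₂)` that anticommutes with every vector and whose square is an
invertible scalar `d`. Multiplying the vectors of an orthogonal summand by `ω` makes them commute
with `Cl(Q₂)`, at the price of scaling their squares by `d`; this turns the graded tensor product
`Cl(d • Q₁ ⊥ Q₂)` into the ordinary one, `Cl(Q₁) ⊗ Cl(Q₂)`. For `Q₂ = ⟨1, 1⟩` one may take
`ω = e₁e₂`, with `d = -1`, and `Cl(Q₂)` is the split quaternion algebra, that is, the `2 × 2`
matrices. Hence `Cl(⟨1, 1, 1⟩) ≃ Cl(⟨-1⟩) ⊗ M₂(ℝ) ≃ ℂ ⊗ M₂(ℝ) ≃ M₂(ℂ)`.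
-/

open CliffordAlgebra
open scoped TensorProduct Quaternion

variable {R M₁ M₂ : Type*} [CommRing R] [AddCommGroup M₁] [Module R M₁]
  [AddCommGroup M₂] [Module R M₂]

section TwistingElement

/-- A twisting element of `CliffordAlgebra Q`: an even element that anticommutes with all vectors
and has the scalar `d` as its square. The model is the volume element of a form of even rank. -/
structure IsTwistingElement (Q : QuadraticForm R M₂) (d : R) (ω : CliffordAlgebra Q) : Prop where
  mem_even : ω ∈ evenOdd Q 0
  mul_self : ω * ω = algebraMap R (CliffordAlgebra Q) d
  mul_ι : ∀ v, ω * ι Q v = -(ι Q v * ω)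

theorem commute_of_commute_ι {A : Type*} [Semiring A] [Algebra R A] {Q : QuadraticForm R M₁}
    (f : CliffordAlgebra Q →ₐ[R] A) {a : A} (h : ∀ m, Commute (f (ι Q m)) a)
    (x : CliffordAlgebra Q) : Commute (f x) a := by
  induction x using CliffordAlgebra.induction with
  | algebraMap r => rw [AlgHom.commutes]; exact Algebra.commutes r a
  | ι m => exact h m
  | mul x y hx hy => rw [map_mul]; exact hx.mul_left hy
  | add x y hx hy => rw [map_add]; exact hx.add_left hy

namespace IsTwistingElement

variable (Q₁ : QuadraticForm R M₁) {Q₂ : QuadraticForm R M₂} {d : R} {ω : CliffordAlgebra Q₂}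

/-- The algebra map `Cl(d • Q₁ ⊥ Q₂) → Cl(Q₁) ⊗ Cl(Q₂)` that sends a vector `(m, v)` to
`m ⊗ ω + 1 ⊗ v`. -/
noncomputable def prodToTensor (hω : IsTwistingElement Q₂ d ω) :
    CliffordAlgebra ((d • Q₁).prod Q₂) →ₐ[R] CliffordAlgebra Q₁ ⊗[R] CliffordAlgebra Q₂ :=
  CliffordAlgebra.lift _
    ⟨((TensorProduct.mk R _ _).flip ω ∘ₗ ι Q₁).coprod (TensorProduct.mk R _ _ 1 ∘ₗ ι Q₂), by
      rintro ⟨m, v⟩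
      simp [add_mul, mul_add, hω.mul_self, hω.mul_ι, TensorProduct.tmul_neg,
        Algebra.algebraMap_eq_smul_one, TensorProduct.smul_tmul', smul_smul, add_smul,
        Algebra.TensorProduct.one_def]⟩

@[simp]
theorem prodToTensor_ι (hω : IsTwistingElement Q₂ d ω) (m : M₁) (v : M₂) :
    hω.prodToTensor Q₁ (ι _ (m, v)) = ι Q₁ m ⊗ₜ ω + 1 ⊗ₜ ι Q₂ v := by
  rw [prodToTensor, lift_ι_apply]
  rfl

theorem prodToTensor_comp_map_inr (hω : IsTwistingElement Q₂ d ω) :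
    (hω.prodToTensor Q₁).comp (map (.inr _ _)) = Algebra.TensorProduct.includeRight := by
  ext v
  simp

theorem commute_ι_map_inr (hω : IsTwistingElement Q₂ d ω) (m : M₁) :
    Commute (ι ((d • Q₁).prod Q₂) (m, 0)) (map (.inr _ _) ω) := by
  simpa using commute_map_mul_map_of_isOrtho_of_mem_evenOdd_zero_right
    (.inl (d • Q₁) Q₂) (.inr _ _)
    QuadraticMap.IsOrtho.inl_inr _ ω (ι_mem_evenOdd_one _ m) hω.mem_even

theorem map_inr_mul_self (hω : IsTwistingElement Q₂ d ω) :
    map (.inr (d • Q₁) Q₂) ω * map (.inr _ _) ω = algebraMap R _ d := by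
  rw [← map_mul, hω.mul_self, AlgHom.commutes]

variable [Invertible d]

/-- The algebra map `Cl(Q₁) → Cl(d • Q₁ ⊥ Q₂)` that sends a vector `m` to `d⁻¹ m ω`. -/
noncomputable def twistedInl (hω : IsTwistingElement Q₂ d ω) :
    CliffordAlgebra Q₁ →ₐ[R] CliffordAlgebra ((d • Q₁).prod Q₂) :=
  CliffordAlgebra.lift Q₁
    ⟨⅟d • LinearMap.mulRight R (map (.inr _ _) ω) ∘ₗ ι _ ∘ₗ LinearMap.inl R M₁ M₂, fun m => by
      have hcomm := (hω.commute_ι_map_inr Q₁ m).symm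
      simp [hcomm.mul_mul_mul_comm, hω.map_inr_mul_self,
        Algebra.algebraMap_eq_smul_one, smul_smul]⟩

@[simp]
theorem twistedInl_ι (hω : IsTwistingElement Q₂ d ω) (m : M₁) :
    hω.twistedInl Q₁ (ι Q₁ m) = ⅟d • (ι _ (m, 0) * map (.inr _ _) ω) := by
  simp [twistedInl]

theorem commute_twistedInl_map_inr (hω : IsTwistingElement Q₂ d ω)
    (x : CliffordAlgebra Q₁) (y : CliffordAlgebra Q₂) :
    Commute (hω.twistedInl Q₁ x) (map (.inr _ _) y) := by
  refine commute_of_commute_ι _ (fun m => (commute_of_commute_ι _ (fun v => ?_) y).symm) x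
  have hmv : ι ((d • Q₁).prod Q₂) (0, v) * ι _ (m, 0) = -(ι _ (m, 0) * ι _ (0, v)) :=
    ι_mul_ι_comm_of_isOrtho (.inr_inl m v)
  have hωv : map (.inr (d • Q₁) Q₂) ω * ι _ (0, v) = -(ι _ (0, v) * map (.inr _ _) ω) := by
    simpa using congrArg (map (.inr (d • Q₁) Q₂)) (hω.mul_ι v)
  rw [twistedInl_ι, map_apply_ι, QuadraticMap.Isometry.inr_apply]
  refine Commute.smul_right ?_ _
  rw [commute_iff_eq, ← mul_assoc, hmv, mul_assoc, hωv, neg_mul, mul_neg, mul_assoc]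

/-- The algebra map `Cl(Q₁) ⊗ Cl(Q₂) → Cl(d • Q₁ ⊥ Q₂)` inverse to `prodToTensor`. -/
noncomputable def tensorToProd (hω : IsTwistingElement Q₂ d ω) :
    CliffordAlgebra Q₁ ⊗[R] CliffordAlgebra Q₂ →ₐ[R] CliffordAlgebra ((d • Q₁).prod Q₂) :=
  Algebra.TensorProduct.lift (hω.twistedInl Q₁) (map (.inr _ _)) (hω.commute_twistedInl_map_inr Q₁)

theorem tensorToProd_comp_prodToTensor (hω : IsTwistingElement Q₂ d ω) :
    (hω.tensorToProd Q₁).comp (hω.prodToTensor Q₁) = AlgHom.id R _ := by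
  ext m
  · simp [tensorToProd, mul_assoc, hω.map_inr_mul_self, ← Algebra.commutes d, ← Algebra.smul_def]
  · simp [tensorToProd]

theorem prodToTensor_comp_tensorToProd (hω : IsTwistingElement Q₂ d ω) :
    (hω.prodToTensor Q₁).comp (hω.tensorToProd Q₁) = AlgHom.id R _ := by
  have hinr := DFunLike.congr_fun (hω.prodToTensor_comp_map_inr Q₁)
  simp only [AlgHom.comp_apply] at hinr
  ext m
  · simp [tensorToProd, hinr, hω.mul_self, Algebra.algebraMap_eq_smul_one, smul_smul]
  · simp [tensorToProd]

/-- The Clifford algebra of `d • Q₁ ⊥ Q₂` as an ungraded tensor product, in the presence of a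
twisting element of square `d`. -/
noncomputable def prodEquivTensor (hω : IsTwistingElement Q₂ d ω) :
    CliffordAlgebra ((d • Q₁).prod Q₂) ≃ₐ[R] CliffordAlgebra Q₁ ⊗[R] CliffordAlgebra Q₂ :=
  AlgEquiv.ofAlgHom (hω.prodToTensor Q₁) (hω.tensorToProd Q₁)
    (hω.prodToTensor_comp_tensorToProd Q₁) (hω.tensorToProd_comp_prodToTensor Q₁)

end IsTwistingElement

end TwistingElement

section Quaternion

theorem isTwistingElement_ι_mul_ι (c₁ c₂ : R) :
    IsTwistingElement (CliffordAlgebraQuaternion.Q c₁ c₂) (-(c₁ * c₂))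
      (ι _ (1, 0) * ι _ (0, 1)) where
  mem_even := ι_mul_ι_mem_evenOdd_zero _ _ _
  mul_self := by
    simpa [Algebra.algebraMap_eq_smul_one] using
      (CliffordAlgebraQuaternion.quaternionBasis c₁ c₂).k_mul_k
  mul_ι v := by
    apply CliffordAlgebraQuaternion.equiv.injective
    ext <;> simp

/-- The quaternion basis `i = diag(1, -1)`, `j = antidiag(1, 1)` of the `2 × 2` matrices. -/
@[simps]
def matrixSplitQuaternionBasis :
    QuaternionAlgebra.Basis (Matrix (Fin 2) (Fin 2) R) (1 : R) 0 1 where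
  i := !![1, 0; 0, -1]
  j := !![0, 1; 1, 0]
  k := !![0, 1; -1, 0]
  i_mul_i := by simp [Matrix.one_fin_two]
  j_mul_j := by simp [Matrix.one_fin_two]
  i_mul_j := by simp
  j_mul_i := by simp

theorem matrixSplitQuaternionBasis_lift (q : ℍ[R,1,0,1]) :
    matrixSplitQuaternionBasis.lift q =
      !![q.re + q.imI, q.imJ + q.imK; q.imJ - q.imK, q.re - q.imI] := by
  ext i j
  fin_cases i <;> fin_cases j <;>
    simp [QuaternionAlgebra.Basis.lift, Matrix.algebraMap_matrix_apply, sub_eq_add_neg]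

/-- The isomorphism of the split quaternions with the `2 × 2` matrices. -/
def splitQuaternionEquivMatrix [Invertible (2 : R)] :
    ℍ[R,1,0,1] ≃ₐ[R] Matrix (Fin 2) (Fin 2) R where
  __ := matrixSplitQuaternionBasis.liftHom
  invFun A := ⟨⅟2 * (A 0 0 + A 1 1), ⅟2 * (A 0 0 - A 1 1), ⅟2 * (A 0 1 + A 1 0),
    ⅟2 * (A 0 1 - A 1 0)⟩
  left_inv q := by
    ext <;> simp [matrixSplitQuaternionBasis_lift, ← two_mul]
  right_inv A := by
    ext i j
    fin_cases i <;> fin_cases j <;>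
      simp [matrixSplitQuaternionBasis_lift, ← mul_add, ← mul_sub, ← two_mul]

end Quaternion

section Periodicity

/-- The isomorphism `Cl(-Q ⊥ ⟨1, 1⟩) ≃ M₂(Cl(Q))`, one of the steps of Bott periodicity. -/
noncomputable def negProdEquivMatrix [Invertible (2 : R)] (Q : QuadraticForm R M₁) :
    CliffordAlgebra (((-1 : R) • Q).prod (CliffordAlgebraQuaternion.Q 1 1)) ≃ₐ[R]
      Matrix (Fin 2) (Fin 2) (CliffordAlgebra Q) :=
  have hω : IsTwistingElement (CliffordAlgebraQuaternion.Q (1 : R) 1) (-1)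
      (ι _ (1, 0) * ι _ (0, 1)) := by
    simpa using isTwistingElement_ι_mul_ι (1 : R) 1
  letI : Invertible (-1 : R) := letI := invertibleOne (α := R); invertibleNeg 1
  (hω.prodEquivTensor Q).trans <|
    (Algebra.TensorProduct.congr .refl
      (CliffordAlgebraQuaternion.equiv.trans splitQuaternionEquivMatrix)).trans
      (matrixEquivTensor (Fin 2) R (CliffordAlgebra Q)).symm

/-- The isometry `⟨w₀, w₁, w₂⟩ ≃ ⟨w₀⟩ ⊥ ⟨w₁, w₂⟩`. -/
def weightedSumSquaresFinThreeIsometryEquiv (w : Fin 3 → R) :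
    (QuadraticMap.weightedSumSquares R w).IsometryEquiv
      ((w 0 • QuadraticMap.sq).prod (CliffordAlgebraQuaternion.Q (w 1) (w 2))) where
  __ := (Fin.consLinearEquiv R fun _ : Fin 3 => R).symm ≪≫ₗ
    (LinearEquiv.refl R R).prodCongr (LinearEquiv.finTwoArrow R R)
  map_app' v := by
    simp [QuadraticMap.weightedSumSquares_apply, Fin.sum_univ_three, add_assoc, Fin.tail]

end Periodicity

theorem cliffordAlgebra_R3_isomorphic_complexMatrix_general (R : Type*) [CommRing R]
    [Invertible (2 : R)] :
    Nonempty
      (CliffordAlgebra (QuadraticMap.weightedSumSquares R (fun _ : Fin 3 => (1 : R)))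
        ≃ₐ[R] Matrix (Fin 2) (Fin 2) (CliffordAlgebra (-QuadraticMap.sq : QuadraticForm R R))) := by
  have hneg : (1 : R) • QuadraticMap.sq = (-1 : R) • (-QuadraticMap.sq : QuadraticForm R R) := by
    simp
  have e := weightedSumSquaresFinThreeIsometryEquiv (fun _ => (1 : R))
  rw [hneg] at e
  exact ⟨(equivOfIsometry e).trans (negProdEquivMatrix _)⟩

/-- `R₃ = C₂`: the Clifford algebra with three generators squaring to `+1`
is the algebra of complex quaternions (hyperbolic biquaternions), i.e. the
`2 × 2` complex matrices viewed as an `ℝ`-algebra. -/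
theorem cliffordAlgebra_R3_isomorphic_complexMatrix :
    Nonempty
      (CliffordAlgebra (QuadraticMap.weightedSumSquares ℝ (fun _ : Fin 3 => (1 : ℝ)))
        ≃ₐ[ℝ] Matrix (Fin 2) (Fin 2) ℂ) := by
  obtain ⟨e⟩ := cliffordAlgebra_R3_isomorphic_complexMatrix_general ℝ
  exact ⟨e.trans CliffordAlgebraComplex.equiv.mapMatrix⟩
end

section
/- The real Clifford algebra Clℝ(w) with n = 3 and w identically −1 (the algebra ³R₃ with three generators each squaring to −1) is isomorphic as an ℝ-algebra to the product algebra ℍ × ℍ, the direct sum of two copies of the quaternion algebra over ℝ. (The identity ³R₃ = ²Ω₂: the algebra of elliptic biquaternions, quaternions over the double numbers Ω = ℝ ⊕ ℝ.) -/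
/-!
Write `e₀, e₁, e₂` for the generators of the Clifford algebra of `⟨c₁, c₂, -c₁c₂⟩`, which is the
form `x ↦ x²` on the pure quaternions of `ℍ[R,c₁,0,c₂]`. Inclusion of the pure quaternions
therefore extends to an algebra homomorphism `π` onto `ℍ[R,c₁,0,c₂]`, and precomposing with the
grade involution gives a second one, which differs from `π` by a sign on each `eᵢ`. The number of
generators being odd, `e₀e₁e₂` is central, and its multiple `u = -(c₁c₂)⁻¹e₀e₁e₂` satisfies
`u² = 1`; the two homomorphisms send it to `1` and `-1`. Hence the central idempotents
`(1 ± u) / 2` cut the algebra into two factors, and each is a copy of the quaternion algebra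
spanned by `1, ue₀, ue₁, e₀e₁`. For `c₁ = c₂ = -1` all three weights are `-1`.
-/

open CliffordAlgebra QuadraticMap
open scoped Quaternion

section Idempotent

variable {R A B C : Type*} [CommRing R] [Ring A] [Algebra R A]

theorem isIdempotentElem_invOf_two_smul_one_add_s12 [Invertible (2 : R)] {u : A} (hu : u * u = 1) :
    IsIdempotentElem (⅟(2 : R) • (1 + u)) := by
  have h_sq : (1 + u) * (1 + u) = (2 : R) • (1 + u) := by
    simp only [mul_add, add_mul, one_mul, mul_one, hu, two_smul]
    abel
  rw [IsIdempotentElem, smul_mul_smul_comm, h_sq, mul_smul, invOf_smul_smul]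

variable [Semiring B] [Algebra R B] [Semiring C] [Algebra R C]

/-- The algebra homomorphism `(b, c) ↦ f b * p + g c * (1 - p)` glued from `f : B →ₐ[R] A` and
`g : C →ₐ[R] A` along a central idempotent `p` of `A`. -/
def prodAlgHomOfIsIdempotentElem (f : B →ₐ[R] A) (g : C →ₐ[R] A) {p : A}
    (hp : IsIdempotentElem p) (hp_center : p ∈ Subalgebra.center R A) : B × C →ₐ[R] A :=
  AlgHom.ofLinearMap
    ((LinearMap.mulRight R p ∘ₗ f.toLinearMap).coprod
      (LinearMap.mulRight R (1 - p) ∘ₗ g.toLinearMap))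
    (by simp)
    (by
      rintro ⟨b, c⟩ ⟨b', c'⟩
      have hpx (x : A) : Commute p x := (Subalgebra.mem_center_iff.mp hp_center x).symm
      have hqx (x : A) : Commute (1 - p) x := (Commute.one_left x).sub_left (hpx x)
      have h_cross (x y : A) : x * p * (y * (1 - p)) = 0 := by
        rw [(hpx y).mul_mul_mul_comm, hp.mul_one_sub_self, mul_zero]
      have h_cross' (x y : A) : x * (1 - p) * (y * p) = 0 := by
        rw [(hqx y).mul_mul_mul_comm, hp.one_sub_mul_self, mul_zero]
      simp only [LinearMap.coprod_apply, LinearMap.comp_apply, LinearMap.mulRight_apply,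
        AlgHom.toLinearMap_apply, Prod.mk_mul_mk, map_mul, add_mul, mul_add, h_cross, h_cross',
        (hpx (f b')).mul_mul_mul_comm, (hqx (g c')).mul_mul_mul_comm, hp.eq, hp.one_sub.eq,
        zero_add, add_zero])

theorem prodAlgHomOfIsIdempotentElem_apply (f : B →ₐ[R] A) (g : C →ₐ[R] A) {p : A}
    (hp : IsIdempotentElem p) (hp_center : p ∈ Subalgebra.center R A) (x : B × C) :
    prodAlgHomOfIsIdempotentElem f g hp hp_center x = f x.1 * p + g x.2 * (1 - p) :=
  rfl

end Idempotent

section Generator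

variable {R κ : Type*} [CommRing R] [Fintype κ] [DecidableEq κ] (w : κ → R)

/-- The generator `eᵢ` of the Clifford algebra of the diagonal form with weights `w`. -/
def cliffordGenerator (i : κ) : CliffordAlgebra (weightedSumSquares R w) :=
  ι _ (Pi.single i 1)

theorem cliffordGenerator_mul_self (i : κ) :
    cliffordGenerator w i * cliffordGenerator w i = algebraMap R _ (w i) := by
  rw [cliffordGenerator, ι_sq_scalar]
  simp [weightedSumSquares_apply, Pi.single_apply]

theorem semiconjBy_cliffordGenerator_neg {i j : κ} (hij : i ≠ j) :
    SemiconjBy (cliffordGenerator w i) (cliffordGenerator w j) (-cliffordGenerator w j) := by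
  have h_ortho : (weightedSumSquares R w).IsOrtho (Pi.single i 1) (Pi.single j 1) := by
    simp [isOrtho_def, weightedSumSquares_apply, Pi.single_apply, mul_add,
      Finset.sum_add_distrib, hij, hij.symm]
  rw [SemiconjBy, neg_mul]
  exact ι_mul_ι_comm_of_isOrtho h_ortho

theorem cliffordGenerator_mul_mul_self {i j : κ} (hij : i ≠ j) :
    (cliffordGenerator w i * cliffordGenerator w j) *
      (cliffordGenerator w i * cliffordGenerator w j) = algebraMap R _ (-(w i * w j)) := by
  have h_anti : cliffordGenerator w j * cliffordGenerator w i =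
      -(cliffordGenerator w i * cliffordGenerator w j) := by
    rw [← neg_mul, (semiconjBy_cliffordGenerator_neg w hij.symm).eq]
  calc
    _ = cliffordGenerator w i * (cliffordGenerator w j * cliffordGenerator w i) *
          cliffordGenerator w j := by simp only [mul_assoc]
    _ = -((cliffordGenerator w i * cliffordGenerator w i) *
          (cliffordGenerator w j * cliffordGenerator w j)) := by
      simp only [h_anti, mul_neg, neg_mul, mul_assoc]
    _ = algebraMap R _ (-(w i * w j)) := by
      simp only [cliffordGenerator_mul_self, map_neg, map_mul]

@[simp]
theorem involute_cliffordGenerator (i : κ) :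
    involute (cliffordGenerator w i) = -cliffordGenerator w i :=
  involute_ι _

variable {w}

theorem algHom_ext_cliffordGenerator {A : Type*} [Semiring A] [Algebra R A]
    {f g : CliffordAlgebra (weightedSumSquares R w) →ₐ[R] A}
    (h : ∀ i, f (cliffordGenerator w i) = g (cliffordGenerator w i)) : f = g :=
  CliffordAlgebra.hom_ext <| (Pi.basisFun R κ).ext fun i ↦ by
    simpa [cliffordGenerator] using h i

theorem mem_center_of_forall_commute_cliffordGenerator
    {z : CliffordAlgebra (weightedSumSquares R w)}
    (hz : ∀ i, Commute (cliffordGenerator w i) z) : z ∈ Subalgebra.center R _ := by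
  have h_ι : LinearMap.mulRight R z ∘ₗ ι _ = LinearMap.mulLeft R z ∘ₗ ι _ :=
    (Pi.basisFun R κ).ext fun i ↦ by simpa [cliffordGenerator] using (hz i).eq
  refine Subalgebra.mem_center_iff.mpr fun x ↦ ?_
  change Commute x z
  induction x using CliffordAlgebra.induction with
  | algebraMap r => exact Algebra.commute_algebraMap_left r z
  | ι v => exact LinearMap.congr_fun h_ι v
  | mul x y hx hy => exact hx.mul_left hy
  | add x y hx hy => exact hx.add_left hy

end Generator

section Pseudoscalar

variable {R : Type*} [CommRing R] (w : Fin 3 → R)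

/-- The pseudoscalar `e₀e₁e₂` of the Clifford algebra of a ternary diagonal form. -/
def cliffordPseudoscalar : CliffordAlgebra (weightedSumSquares R w) :=
  cliffordGenerator w 0 * cliffordGenerator w 1 * cliffordGenerator w 2

theorem cliffordPseudoscalar_mem_center : cliffordPseudoscalar w ∈ Subalgebra.center R _ := by
  have anti (i j : Fin 3) (hij : i ≠ j) := semiconjBy_cliffordGenerator_neg w hij
  have self (i : Fin 3) : SemiconjBy (cliffordGenerator w i) _ _ := Commute.refl _
  -- Moving `eᵢ` past `e₀e₁e₂` changes the sign twice, once for each of the other generators.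
  refine mem_center_of_forall_commute_cliffordGenerator fun i ↦ ?_
  fin_cases i
  · simpa [cliffordPseudoscalar, Commute] using
      ((self 0).mul_right (anti 0 1 (by decide))).mul_right (anti 0 2 (by decide))
  · simpa [cliffordPseudoscalar, Commute] using
      ((anti 1 0 (by decide)).mul_right (self 1)).mul_right (anti 1 2 (by decide))
  · simpa [cliffordPseudoscalar, Commute] using
      ((anti 2 0 (by decide)).mul_right (anti 2 1 (by decide))).mul_right (self 2)

theorem involute_cliffordPseudoscalar :
    involute (cliffordPseudoscalar w) = -cliffordPseudoscalar w := by
  simp [cliffordPseudoscalar]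

theorem cliffordGenerator_zero_mul_one_mul_pseudoscalar :
    cliffordGenerator w 0 * cliffordGenerator w 1 * cliffordPseudoscalar w =
      -(w 0 * w 1) • cliffordGenerator w 2 := by
  rw [cliffordPseudoscalar, ← mul_assoc, cliffordGenerator_mul_mul_self w (by decide),
    ← Algebra.smul_def]

theorem cliffordPseudoscalar_mul_self :
    cliffordPseudoscalar w * cliffordPseudoscalar w = algebraMap R _ (-(w 0 * w 1 * w 2)) := by
  have h_comm := Subalgebra.mem_center_iff.mp (cliffordPseudoscalar_mem_center w)
    (cliffordGenerator w 2)
  calc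
    _ = cliffordGenerator w 0 * cliffordGenerator w 1 * cliffordPseudoscalar w *
          cliffordGenerator w 2 := by
      rw [mul_assoc _ (cliffordPseudoscalar w), ← h_comm, ← mul_assoc, cliffordPseudoscalar]
    _ = algebraMap R _ (-(w 0 * w 1 * w 2)) := by
      rw [cliffordGenerator_zero_mul_one_mul_pseudoscalar, smul_mul_assoc,
        cliffordGenerator_mul_self, Algebra.smul_def, ← map_mul, neg_mul]

end Pseudoscalar

section PureQuaternion

variable {R : Type*} [CommRing R] (c₁ c₂ : R)

/-- The weights of the form `x ↦ x²` on the pure quaternions of `ℍ[R,c₁,0,c₂]`, in the basis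
`i, j, k`. -/
abbrev pureQuaternionWeights : Fin 3 → R := ![c₁, c₂, -(c₁ * c₂)]

theorem pureQuaternionWeights_neg_one : pureQuaternionWeights (-1 : R) (-1) = fun _ ↦ -1 := by
  ext i
  fin_cases i <;> simp

/-- The Clifford algebra of the form `x ↦ x²` on the pure quaternions of `ℍ[R,c₁,0,c₂]`. -/
abbrev PureQuaternionClifford : Type _ :=
  CliffordAlgebra (weightedSumSquares R (pureQuaternionWeights c₁ c₂))

/-- The homomorphism `π` that extends the inclusion of the pure quaternions. -/
def cliffordToQuaternion : PureQuaternionClifford c₁ c₂ →ₐ[R] ℍ[R,c₁,0,c₂] :=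
  CliffordAlgebra.lift _
    ⟨{  toFun := fun v ↦ ⟨0, v 0, v 1, v 2⟩
        map_add' := fun v v' ↦ by simp
        map_smul' := fun r v ↦ by ext <;> simp }, fun v ↦ by
      ext <;> simp [weightedSumSquares_apply, Fin.sum_univ_three] <;> ring⟩

theorem cliffordToQuaternion_generator (i : Fin 3) :
    cliffordToQuaternion c₁ c₂ (cliffordGenerator _ i) =
      ![(QuaternionAlgebra.Basis.self R).i, (QuaternionAlgebra.Basis.self R).j,
        (QuaternionAlgebra.Basis.self R).k] i := by
  rw [cliffordToQuaternion, cliffordGenerator, lift_ι_apply]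
  fin_cases i <;> ext <;> simp

theorem cliffordToQuaternion_pseudoscalar :
    cliffordToQuaternion c₁ c₂ (cliffordPseudoscalar _) = algebraMap R _ (-(c₁ * c₂)) := by
  simp only [cliffordPseudoscalar, map_mul, cliffordToQuaternion_generator, Matrix.cons_val,
    QuaternionAlgebra.Basis.i_mul_j, QuaternionAlgebra.Basis.k_mul_k,
    Algebra.algebraMap_eq_smul_one, neg_smul]

/-- The pair of homomorphisms `(π, π ∘ involute)`. -/
def cliffordToQuaternionProd :
    PureQuaternionClifford c₁ c₂ →ₐ[R] ℍ[R,c₁,0,c₂] × ℍ[R,c₁,0,c₂] :=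
  (cliffordToQuaternion c₁ c₂).prod ((cliffordToQuaternion c₁ c₂).comp involute)

theorem cliffordToQuaternionProd_generator (i : Fin 3) :
    cliffordToQuaternionProd c₁ c₂ (cliffordGenerator _ i) =
      (cliffordToQuaternion c₁ c₂ (cliffordGenerator _ i),
        -cliffordToQuaternion c₁ c₂ (cliffordGenerator _ i)) := by
  simp [cliffordToQuaternionProd]

section UnitPseudoscalar

variable [Invertible (c₁ * c₂)]

/-- The multiple `u` of the pseudoscalar with `π u = 1`. -/
def unitPseudoscalar : PureQuaternionClifford c₁ c₂ :=
  -⅟(c₁ * c₂) • cliffordPseudoscalar _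

theorem unitPseudoscalar_mem_center : unitPseudoscalar c₁ c₂ ∈ Subalgebra.center R _ :=
  Subalgebra.smul_mem _ (cliffordPseudoscalar_mem_center _) _

theorem commute_unitPseudoscalar (x : PureQuaternionClifford c₁ c₂) :
    Commute (unitPseudoscalar c₁ c₂) x :=
  (Subalgebra.mem_center_iff.mp (unitPseudoscalar_mem_center c₁ c₂) x).symm

theorem unitPseudoscalar_mul_self : unitPseudoscalar c₁ c₂ * unitPseudoscalar c₁ c₂ = 1 := by
  have h_sq : cliffordPseudoscalar (pureQuaternionWeights c₁ c₂) * cliffordPseudoscalar _ =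
      ((c₁ * c₂) * (c₁ * c₂)) • 1 := by
    rw [cliffordPseudoscalar_mul_self, Algebra.algebraMap_eq_smul_one]
    simp
  rw [unitPseudoscalar, smul_mul_smul_comm, neg_mul_neg, h_sq, smul_smul, mul_mul_mul_comm,
    invOf_mul_self, one_mul, one_smul]

theorem unitPseudoscalar_mul_mul_unitPseudoscalar_mul (x y : PureQuaternionClifford c₁ c₂) :
    unitPseudoscalar c₁ c₂ * x * (unitPseudoscalar c₁ c₂ * y) = x * y := by
  rw [(commute_unitPseudoscalar c₁ c₂ x).symm.mul_mul_mul_comm, unitPseudoscalar_mul_self, one_mul]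

theorem cliffordGenerator_zero_mul_one_mul_unitPseudoscalar :
    cliffordGenerator _ 0 * cliffordGenerator _ 1 * unitPseudoscalar c₁ c₂ =
      cliffordGenerator _ 2 := by
  rw [unitPseudoscalar, mul_smul_comm, cliffordGenerator_zero_mul_one_mul_pseudoscalar]
  simp [smul_smul]

theorem cliffordToQuaternionProd_unitPseudoscalar :
    cliffordToQuaternionProd c₁ c₂ (unitPseudoscalar c₁ c₂) = (1, -1) := by
  have h_one : cliffordToQuaternion c₁ c₂ (unitPseudoscalar c₁ c₂) = 1 := by
    rw [unitPseudoscalar, map_smul, cliffordToQuaternion_pseudoscalar, Algebra.smul_def, ← map_mul,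
      neg_mul_neg, invOf_mul_self, map_one]
  have h_involute : involute (unitPseudoscalar c₁ c₂) = -unitPseudoscalar c₁ c₂ := by
    rw [unitPseudoscalar, map_smul, involute_cliffordPseudoscalar, smul_neg]
  simp [cliffordToQuaternionProd, h_one, h_involute]

/-- The quaternion basis `ue₀, ue₁, e₀e₁`, on which `π` and `π ∘ involute` agree. -/
def cliffordQuaternionBasis :
    QuaternionAlgebra.Basis (PureQuaternionClifford c₁ c₂) c₁ 0 c₂ where
  i := unitPseudoscalar c₁ c₂ * cliffordGenerator _ 0
  j := unitPseudoscalar c₁ c₂ * cliffordGenerator _ 1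
  k := cliffordGenerator _ 0 * cliffordGenerator _ 1
  i_mul_i := by
    rw [unitPseudoscalar_mul_mul_unitPseudoscalar_mul, cliffordGenerator_mul_self]
    simp [Algebra.smul_def]
  j_mul_j := by
    rw [unitPseudoscalar_mul_mul_unitPseudoscalar_mul, cliffordGenerator_mul_self]
    simp [Algebra.smul_def]
  i_mul_j := unitPseudoscalar_mul_mul_unitPseudoscalar_mul c₁ c₂ _ _
  j_mul_i := by
    rw [unitPseudoscalar_mul_mul_unitPseudoscalar_mul, zero_smul, zero_sub, ← neg_mul]
    exact (semiconjBy_cliffordGenerator_neg _ (by decide)).eq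

theorem cliffordToQuaternionProd_liftHom (x : ℍ[R,c₁,0,c₂]) :
    cliffordToQuaternionProd c₁ c₂ ((cliffordQuaternionBasis c₁ c₂).liftHom x) = (x, x) := by
  have h_diag : (cliffordToQuaternionProd c₁ c₂).comp (cliffordQuaternionBasis c₁ c₂).liftHom =
      (AlgHom.id R _).prod (AlgHom.id R _) := by
    ext : 1 <;>
      simp [QuaternionAlgebra.Basis.liftHom, QuaternionAlgebra.Basis.lift, cliffordQuaternionBasis,
        cliffordToQuaternionProd_generator, cliffordToQuaternionProd_unitPseudoscalar,
        cliffordToQuaternion_generator]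
  exact AlgHom.congr_fun h_diag x

variable [Invertible (2 : R)]

/-- The inverse of `(π, π ∘ involute)`, which sends each factor to the corresponding one of the
two ideals generated by `(1 ± u) / 2`. -/
def cliffordOfQuaternionProd :
    ℍ[R,c₁,0,c₂] × ℍ[R,c₁,0,c₂] →ₐ[R] PureQuaternionClifford c₁ c₂ :=
  prodAlgHomOfIsIdempotentElem (cliffordQuaternionBasis c₁ c₂).liftHom
    (cliffordQuaternionBasis c₁ c₂).liftHom
    (isIdempotentElem_invOf_two_smul_one_add_s12 (unitPseudoscalar_mul_self c₁ c₂))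
    (Subalgebra.smul_mem _ (add_mem (one_mem _) (unitPseudoscalar_mem_center c₁ c₂)) _)

theorem cliffordOfQuaternionProd_antidiag (x : ℍ[R,c₁,0,c₂]) :
    cliffordOfQuaternionProd c₁ c₂ (x, -x) =
      (cliffordQuaternionBasis c₁ c₂).liftHom x * unitPseudoscalar c₁ c₂ := by
  have h_sub (u : PureQuaternionClifford c₁ c₂) :
      ⅟(2 : R) • (1 + u) - (1 - ⅟(2 : R) • (1 + u)) = u := by
    rw [sub_sub_eq_add_sub, ← add_smul, invOf_two_add_invOf_two, one_smul, add_sub_cancel_left]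
  rw [cliffordOfQuaternionProd, prodAlgHomOfIsIdempotentElem_apply, map_neg, neg_mul,
    ← sub_eq_add_neg, ← mul_sub, h_sub]

theorem cliffordToQuaternionProd_comp_cliffordOfQuaternionProd :
    (cliffordToQuaternionProd c₁ c₂).comp (cliffordOfQuaternionProd c₁ c₂) = AlgHom.id R _ := by
  have h_proj : cliffordToQuaternionProd c₁ c₂ (⅟(2 : R) • (1 + unitPseudoscalar c₁ c₂)) =
      (1, 0) := by
    rw [map_smul, map_add, map_one, cliffordToQuaternionProd_unitPseudoscalar]
    ext1
    · change ⅟(2 : R) • (1 + 1 : ℍ[R,c₁,0,c₂]) = 1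
      rw [smul_add, ← add_smul, invOf_two_add_invOf_two, one_smul]
    · simp
  ext1 ⟨x, y⟩
  rw [AlgHom.comp_apply, cliffordOfQuaternionProd, prodAlgHomOfIsIdempotentElem_apply]
  simp only [map_add, map_mul, map_sub, map_one, h_proj, cliffordToQuaternionProd_liftHom]
  ext1 <;> simp

theorem cliffordOfQuaternionProd_comp_cliffordToQuaternionProd :
    (cliffordOfQuaternionProd c₁ c₂).comp (cliffordToQuaternionProd c₁ c₂) = AlgHom.id R _ := by
  refine algHom_ext_cliffordGenerator fun i ↦ ?_
  rw [AlgHom.comp_apply, cliffordToQuaternionProd_generator, cliffordOfQuaternionProd_antidiag,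
    cliffordToQuaternion_generator]
  have h_conj (x : PureQuaternionClifford c₁ c₂) :
      unitPseudoscalar c₁ c₂ * x * unitPseudoscalar c₁ c₂ = x := by
    simpa using unitPseudoscalar_mul_mul_unitPseudoscalar_mul c₁ c₂ x 1
  fin_cases i <;>
    simp [QuaternionAlgebra.Basis.lift, cliffordQuaternionBasis, h_conj,
      cliffordGenerator_zero_mul_one_mul_unitPseudoscalar]

end UnitPseudoscalar

end PureQuaternion

theorem cliffordAlgebra_neg_R3_isomorphic_quaternion_prod_general {R : Type*} [CommRing R]
    {c₁ c₂ : R} (h_two : IsUnit (2 : R)) (hc : IsUnit (c₁ * c₂)) :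
    Nonempty
      (CliffordAlgebra (weightedSumSquares R ![c₁, c₂, -(c₁ * c₂)]) ≃ₐ[R]
        ℍ[R,c₁,0,c₂] × ℍ[R,c₁,0,c₂]) := by
  obtain ⟨_⟩ := h_two.nonempty_invertible
  obtain ⟨_⟩ := hc.nonempty_invertible
  exact ⟨AlgEquiv.ofAlgHom (cliffordToQuaternionProd c₁ c₂) (cliffordOfQuaternionProd c₁ c₂)
    (cliffordToQuaternionProd_comp_cliffordOfQuaternionProd c₁ c₂)
    (cliffordOfQuaternionProd_comp_cliffordToQuaternionProd c₁ c₂)⟩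

/-- `³R₃ = ²Ω₂`: the Clifford algebra with three generators squaring to `-1`
is the algebra of elliptic biquaternions, `ℍ ⊕ ℍ`. -/
theorem cliffordAlgebra_neg_R3_isomorphic_quaternion_prod :
    Nonempty
      (CliffordAlgebra (QuadraticMap.weightedSumSquares ℝ (fun _ : Fin 3 => (-1 : ℝ)))
        ≃ₐ[ℝ] Quaternion ℝ × Quaternion ℝ) := by
  rw [← pureQuaternionWeights_neg_one]
  exact cliffordAlgebra_neg_R3_isomorphic_quaternion_prod_general (by simp) (by simp)
end

section
/- For every natural number m ≥ 1, the real Clifford algebra Clℝ(w) with n = 4m − 1 generators and w identically +1 (the algebra R_{4m−1}) is isomorphic as an ℝ-algebra to the complex Clifford algebra Cℂ(4m − 2) regarded as an ℝ-algebra (via restriction of scalars along ℝ ⊆ ℂ). (The first identity of equation (7): R_{4m'−1} = C_{4m'−2}.) -/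
/-!
For even `n`, let `ω = e₀e₁⋯eₙ` be the product of the `n + 1` generators. The number of generators
being odd, `ω` is central, and `ω² = d` is a scalar. Since `ω = e₀η` with `η = e₁⋯eₙ` and `η²` is
an invertible scalar, `e₀ = ωη / η²` is redundant once `ω` is available: the algebra is generated by
the central copy of `K[√d]` spanned by `1` and `ω` together with `e₁, …, eₙ`, which gives
`Cl(w₀, …, wₙ) ≃ K[√d] ⊗ Cl(w₁, …, wₙ)`, and the right-hand side is the Clifford algebra of the
same weights over `K[√d]`. With `4m - 1` weights equal to `1` one finds `d = -1`.
-/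

open scoped TensorProduct

/-- A family of Clifford generators with prescribed squares: pairwise anticommuting elements of a
`K`-algebra such that `g i` squares to the scalar `w i`. -/
structure IsCliffordFamily {K A ι : Type*} [CommRing K] [Ring A] [Algebra K A]
    (w : ι → K) (g : ι → A) : Prop where
  mul_self (i : ι) : g i * g i = algebraMap K A (w i)
  anticomm {i j : ι} (hij : i ≠ j) : g i * g j = -(g j * g i)

/-- The volume element `g₀g₁⋯gₙ₋₁` of a finite family; the factors need not commute, so the order
matters. -/
def volumeElement {A : Type*} [Monoid A] {n : ℕ} (g : Fin n → A) : A :=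
  (List.ofFn g).prod

/-- The signed discriminant `(-1)^(n(n-1)/2) w₀⋯wₙ₋₁` of the diagonal form with weights `w`; it is
the square of the volume element of a Clifford family with weights `w`. -/
def signedDisc {K : Type*} [CommRing K] {n : ℕ} (w : Fin n → K) : K :=
  (-1) ^ n.choose 2 * ∏ i, w i

/-- The Clifford algebra of the diagonal quadratic form `∑ i, w i * x i ^ 2`. -/
abbrev DiagonalClifford {K ι : Type*} [CommRing K] [Fintype ι] (w : ι → K) :=
  CliffordAlgebra (QuadraticMap.weightedSumSquares K w)

section VolumeElement

variable {A : Type*} {n : ℕ}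

theorem volumeElement_succ [Monoid A] (g : Fin (n + 1) → A) :
    volumeElement g = g 0 * volumeElement (Fin.tail g) := by
  simp only [volumeElement, List.ofFn_succ, List.prod_cons, Fin.tail_def]

theorem map_volumeElement {B F : Type*} [Monoid A] [Monoid B] [FunLike F A B]
    [MonoidHomClass F A B] (f : F) (g : Fin n → A) :
    f (volumeElement g) = volumeElement fun i => f (g i) := by
  rw [volumeElement, map_list_prod, List.map_ofFn]
  rfl

theorem mul_volumeElement_of_anticomm [Ring A] {y : A} {g : Fin n → A}
    (h : ∀ i, y * g i = -(g i * y)) :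
    y * volumeElement g = (-1 : ℤ) ^ n • (volumeElement g * y) := by
  induction n with
  | zero => simp [volumeElement]
  | succ n ih =>
    calc y * volumeElement g = -(g 0 * (y * volumeElement (Fin.tail g))) := by
          rw [volumeElement_succ, ← mul_assoc, h 0, neg_mul, mul_assoc]
      _ = (-1 : ℤ) ^ (n + 1) • (volumeElement g * y) := by
          rw [ih (g := Fin.tail g) fun i => h i.succ, volumeElement_succ, mul_smul_comm,
            pow_succ, mul_neg_one, neg_smul, mul_assoc]

end VolumeElement

section SignedDisc

variable {K : Type*} [CommRing K] {n : ℕ}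

theorem signedDisc_succ (w : Fin (n + 1) → K) :
    signedDisc w = (-1) ^ n * (w 0 * signedDisc (Fin.tail w)) := by
  simp only [signedDisc, Fin.prod_univ_succ, Nat.choose_succ_succ', Nat.choose_one_right, pow_add,
    Fin.tail_def]
  ring

theorem isUnit_signedDisc {w : Fin n → K} (hw : ∀ i, IsUnit (w i)) : IsUnit (signedDisc w) :=
  (isUnit_one.neg.pow _).mul (IsUnit.prod_univ_iff.mpr hw)

theorem signedDisc_one_of_mod_four_eq_three (hn : n % 4 = 3) :
    signedDisc (fun _ : Fin n => (1 : K)) = -1 := by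
  obtain ⟨j, rfl⟩ : ∃ j, n = 4 * j + 3 := ⟨n / 4, by omega⟩
  have choose_eq : (4 * j + 3).choose 2 = (4 * j + 3) * (2 * j + 1) := by
    rw [Nat.choose_two_right]
    exact Nat.div_eq_of_eq_mul_left two_pos (by rw [Nat.add_sub_assoc (by norm_num)]; ring)
  have choose_odd : Odd ((4 * j + 3).choose 2) := by
    rw [choose_eq]
    exact Odd.mul ⟨2 * j + 1, by ring⟩ ⟨j, rfl⟩
  rw [signedDisc, choose_odd.neg_one_pow, Finset.prod_const_one, mul_one]

end SignedDisc

namespace IsCliffordFamily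

section General

variable {K A ι : Type*} [CommRing K] [Ring A] [Algebra K A] {w : ι → K} {g : ι → A}

theorem map (hg : IsCliffordFamily w g) {B : Type*} [Ring B] [Algebra K B] (f : A →ₐ[K] B) :
    IsCliffordFamily w fun i => f (g i) where
  mul_self i := by rw [← map_mul, hg.mul_self, f.commutes]
  anticomm hij := by rw [← map_mul, hg.anticomm hij, map_neg, map_mul]

theorem algebraMap_iff {L : Type*} [CommRing L] [Algebra K L] [Algebra L A] [IsScalarTower K L A] :
    IsCliffordFamily (fun i => algebraMap K L (w i)) g ↔ IsCliffordFamily w g := by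
  constructor <;> refine fun hg => ⟨fun i => ?_, hg.anticomm⟩ <;>
    rw [hg.mul_self, ← IsScalarTower.algebraMap_apply]

theorem sum_smul_mul_self (hg : IsCliffordFamily w g) (v : ι → K) (s : Finset ι) :
    (∑ i ∈ s, v i • g i) * (∑ i ∈ s, v i • g i) =
      algebraMap K A (∑ i ∈ s, w i • (v i * v i)) := by
  classical
  induction s using Finset.induction_on with
  | empty => simp
  | insert a s ha ih =>
    have cross : (v a • g a) * (∑ i ∈ s, v i • g i) = -((∑ i ∈ s, v i • g i) * (v a • g a)) := by
      rw [Finset.mul_sum, Finset.sum_mul, ← Finset.sum_neg_distrib]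
      refine Finset.sum_congr rfl fun i hi => ?_
      rw [smul_mul_smul_comm, smul_mul_smul_comm, hg.anticomm (ne_of_mem_of_not_mem hi ha).symm,
        smul_neg, mul_comm]
    have diagonal : (v a • g a) * (v a • g a) = algebraMap K A (w a • (v a * v a)) := by
      rw [smul_mul_smul_comm, hg.mul_self, Algebra.smul_def, ← map_mul, smul_eq_mul, mul_comm]
    rw [Finset.sum_insert ha, Finset.sum_insert ha, map_add, ← ih, ← diagonal, add_mul, mul_add,
      mul_add, cross]
    abel

end General

section Volume

variable {K A : Type*} [CommRing K] [Ring A] [Algebra K A] {n : ℕ}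

theorem tail {w : Fin (n + 1) → K} {g : Fin (n + 1) → A} (hg : IsCliffordFamily w g) :
    IsCliffordFamily (Fin.tail w) (Fin.tail g) where
  mul_self i := hg.mul_self i.succ
  anticomm hij := hg.anticomm ((Fin.succ_injective n).ne hij)

theorem cons {w : Fin (n + 1) → K} {y : A} {g : Fin n → A} (hy : y * y = algebraMap K A (w 0))
    (hyg : ∀ i, y * g i = -(g i * y)) (hg : IsCliffordFamily (Fin.tail w) g) :
    IsCliffordFamily w (Fin.cons y g : Fin (n + 1) → A) where
  mul_self i := by
    refine Fin.cases ?_ (fun i => ?_) i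
    · exact hy
    · exact hg.mul_self i
  anticomm {i j} := by
    refine Fin.cases ?_ (fun i => ?_) i <;> refine Fin.cases ?_ (fun j => ?_) j <;> intro hij
    · exact absurd rfl hij
    · exact hyg j
    · simp [hyg]
    · exact hg.anticomm (ne_of_apply_ne Fin.succ hij)

variable {w : Fin n → K} {g : Fin n → A}

theorem mul_volumeElement (hg : IsCliffordFamily w g) (i : Fin n) :
    g i * volumeElement g = (-1 : ℤ) ^ (n + 1) • (volumeElement g * g i) := by
  induction n with
  | zero => exact i.elim0
  | succ n ih =>
    rw [volumeElement_succ, pow_succ, pow_succ, mul_assoc ((-1) ^ n), neg_one_mul, neg_neg, mul_one]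
    refine Fin.cases ?_ (fun j => ?_) i
    · rw [mul_assoc, ← mul_smul_comm,
        ← mul_volumeElement_of_anticomm (g := Fin.tail g) fun j =>
          hg.anticomm (Fin.succ_ne_zero j).symm]
    · have ih : g j.succ * volumeElement (Fin.tail g) = _ := ih hg.tail j
      rw [← mul_assoc, hg.anticomm (Fin.succ_ne_zero j), neg_mul, mul_assoc, ih, Fin.tail,
        mul_smul_comm, pow_succ, mul_neg_one, neg_smul, neg_neg, mul_assoc]

theorem commute_volumeElement_of_odd (hg : IsCliffordFamily w g) (hn : Odd n) (i : Fin n) :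
    Commute (g i) (volumeElement g) := by
  rw [commute_iff_eq, hg.mul_volumeElement, hn.add_one.neg_one_pow, one_smul]

theorem mul_volumeElement_of_even (hg : IsCliffordFamily w g) (hn : Even n) (i : Fin n) :
    g i * volumeElement g = -(volumeElement g * g i) := by
  rw [hg.mul_volumeElement, hn.add_one.neg_one_pow, neg_one_smul]

theorem volumeElement_mul_self (hg : IsCliffordFamily w g) :
    volumeElement g * volumeElement g = algebraMap K A (signedDisc w) := by
  induction n with
  | zero => simp [volumeElement, signedDisc]
  | succ n ih =>
    set η := volumeElement (Fin.tail g)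
    have swap : g 0 * η = (-1 : ℤ) ^ n • (η * g 0) :=
      mul_volumeElement_of_anticomm fun j => hg.anticomm (Fin.succ_ne_zero j).symm
    have hη : η * η = algebraMap K A (signedDisc (Fin.tail w)) := ih hg.tail
    calc volumeElement g * volumeElement g = (g 0 * η) * (g 0 * η) := by
          rw [volumeElement_succ]
      _ = (-1 : ℤ) ^ n • (η * (g 0 * g 0) * η) := by
          nth_rw 1 [swap]
          rw [smul_mul_assoc, mul_assoc, mul_assoc, mul_assoc]
      _ = (-1 : ℤ) ^ n • algebraMap K A (w 0 * signedDisc (Fin.tail w)) := by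
          rw [hg.mul_self, ← Algebra.commutes, mul_assoc, hη, ← map_mul]
      _ = algebraMap K A (signedDisc w) := by
          rw [signedDisc_succ, ← map_zsmul, zsmul_eq_mul, Int.cast_pow, Int.cast_neg, Int.cast_one]

end Volume

end IsCliffordFamily

namespace DiagonalClifford

section UniversalProperty

variable {K A ι : Type*} [CommRing K] [Ring A] [Algebra K A] [Fintype ι] [DecidableEq ι]

/-- The `i`-th standard generator of a diagonal Clifford algebra. -/
noncomputable def gen (w : ι → K) (i : ι) : DiagonalClifford w :=
  CliffordAlgebra.ι _ (Pi.single i 1)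

theorem isCliffordFamily_gen (w : ι → K) : IsCliffordFamily w (gen w) where
  mul_self i := by
    rw [gen, CliffordAlgebra.ι_sq_scalar]
    simp [QuadraticMap.weightedSumSquares_apply, Pi.single_apply]
  anticomm {i j} hij := by
    refine eq_neg_of_add_eq_zero_left (CliffordAlgebra.ι_mul_ι_add_swap_of_isOrtho ?_)
    simp only [QuadraticMap.isOrtho_def, QuadraticMap.weightedSumSquares_apply,
      ← Finset.sum_add_distrib]
    refine Finset.sum_congr rfl fun k _ => ?_
    by_cases hk : k = i
    · subst hk; simp [hij]
    · simp [hk]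

/-- The universal property of a diagonal Clifford algebra: a Clifford family with the right weights
determines an algebra homomorphism. -/
noncomputable def lift {w : ι → K} {g : ι → A} (hg : IsCliffordFamily w g) :
    DiagonalClifford w →ₐ[K] A :=
  CliffordAlgebra.lift _ ⟨Fintype.linearCombination K g, fun v => by
    rw [Fintype.linearCombination_apply, hg.sum_smul_mul_self,
      QuadraticMap.weightedSumSquares_apply]⟩

@[simp]
theorem lift_gen {w : ι → K} {g : ι → A} (hg : IsCliffordFamily w g) (i : ι) :
    lift hg (gen w i) = g i := by
  rw [lift, gen, CliffordAlgebra.lift_ι_apply, Fintype.linearCombination_apply_single, one_smul]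

theorem algHom_ext {w : ι → K} {f g : DiagonalClifford w →ₐ[K] A}
    (h : ∀ i, f (gen w i) = g (gen w i)) : f = g :=
  CliffordAlgebra.hom_ext <| LinearMap.pi_ext' fun i => LinearMap.ext_ring (h i)

theorem adjoin_range_gen (w : ι → K) : Algebra.adjoin K (Set.range (gen w)) = ⊤ := by
  refine top_unique fun x _ => ?_
  induction x using CliffordAlgebra.induction with
  | algebraMap r => exact Subalgebra.algebraMap_mem _ r
  | ι v =>
    rw [pi_eq_sum_univ' v, map_sum]
    refine Subalgebra.sum_mem _ fun i _ => ?_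
    rw [map_smul]
    exact Subalgebra.smul_mem _ (Algebra.subset_adjoin (Set.mem_range_self i)) _
  | mul x y hx hy => exact Subalgebra.mul_mem _ (hx trivial) (hy trivial)
  | add x y hx hy => exact Subalgebra.add_mem _ (hx trivial) (hy trivial)

theorem commute_of_commute_gen {w : ι → K} {a : DiagonalClifford w} (h : ∀ i, Commute a (gen w i))
    (x : DiagonalClifford w) : Commute a x := by
  refine Algebra.commute_of_mem_adjoin_of_forall_mem_commute (R := K) (s := Set.range (gen w)) ?_ ?_
  · simp [adjoin_range_gen]
  · rintro _ ⟨i, rfl⟩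
    exact h i

end UniversalProperty

section BaseChange

variable {K ι : Type*} (L : Type*) [CommRing K] [CommRing L] [Algebra K L]
  [Fintype ι] [DecidableEq ι]

theorem isCliffordFamily_one_tmul_gen (w : ι → K) :
    IsCliffordFamily w fun i => (1 : L) ⊗ₜ[K] gen w i :=
  (isCliffordFamily_gen w).map (Algebra.TensorProduct.includeRight : _ →ₐ[K] L ⊗[K] _)

/-- Extending scalars along `K → L` turns the Clifford algebra with weights `w` into the one with
the images of these weights. -/
noncomputable def baseChangeEquiv (w : ι → K) :
    L ⊗[K] DiagonalClifford w ≃ₐ[L] DiagonalClifford fun i => algebraMap K L (w i) :=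
  have hgen := isCliffordFamily_gen fun i => algebraMap K L (w i)
  AlgEquiv.ofAlgHom
    (Algebra.TensorProduct.lift (Algebra.ofId L _)
      (lift (IsCliffordFamily.algebraMap_iff.mp hgen)) fun c x => by
        rw [Algebra.ofId_apply]
        exact Algebra.commute_algebraMap_left c _)
    (lift (IsCliffordFamily.algebraMap_iff.mpr (isCliffordFamily_one_tmul_gen L w)))
    (algHom_ext fun i => by simp)
    (Algebra.TensorProduct.ext (Subsingleton.elim _ _) (algHom_ext fun i => by simp))

end BaseChange

section OddRank

open QuadraticAlgebra

variable {K : Type*} [CommRing K] {n : ℕ}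

theorem commute_volumeElement_gen (hn : Odd n) {w : Fin n → K} (x : DiagonalClifford w) :
    Commute (volumeElement (gen w)) x :=
  commute_of_commute_gen
    (fun i => ((isCliffordFamily_gen w).commute_volumeElement_of_odd hn i).symm) x

variable {w : Fin (n + 1) → K}

/-- The homomorphism `K[√d] ⊗ Cl(w₁, …, wₙ) → Cl(w₀, …, wₙ)` sending `√d` to the central volume
element of the target and each generator to the corresponding one. -/
noncomputable def ofCenterTensor (hn : Even n) (w : Fin (n + 1) → K) :
    QuadraticAlgebra K (signedDisc w) 0 ⊗[K] DiagonalClifford (Fin.tail w) →ₐ[K]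
      DiagonalClifford w :=
  Algebra.TensorProduct.lift
    (QuadraticAlgebra.lift ⟨volumeElement (gen w), by
      rw [(isCliffordFamily_gen w).volumeElement_mul_self, Algebra.algebraMap_eq_smul_one,
        zero_smul, add_zero]⟩)
    (lift (isCliffordFamily_gen w).tail)
    fun z x => by
      rw [QuadraticAlgebra.lift_apply_apply]
      exact ((Commute.one_left _).smul_left _).add_left
        ((commute_volumeElement_gen hn.add_one _).smul_left _)

theorem ofCenterTensor_omega_tmul (hn : Even n) (x : DiagonalClifford (Fin.tail w)) :
    ofCenterTensor hn w (ω ⊗ₜ x) =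
      volumeElement (gen w) * lift (isCliffordFamily_gen w).tail x := by
  simp [ofCenterTensor]

theorem ofCenterTensor_one_tmul (hn : Even n) (x : DiagonalClifford (Fin.tail w)) :
    ofCenterTensor hn w (1 ⊗ₜ x) = lift (isCliffordFamily_gen w).tail x := by
  simp [ofCenterTensor]

theorem isCliffordFamily_centerTensor (hn : Even n) {u : K}
    (hu : u * signedDisc (Fin.tail w) = 1) :
    IsCliffordFamily w (Fin.cons
      (u • ((ω : QuadraticAlgebra K (signedDisc w) 0) ⊗ₜ[K] volumeElement (gen (Fin.tail w))))
      fun i => 1 ⊗ₜ[K] gen (Fin.tail w) i) := by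
  have hgen := isCliffordFamily_gen (Fin.tail w)
  refine .cons ?_ (fun i => ?_) (isCliffordFamily_one_tmul_gen _ _)
  · rw [smul_mul_smul_comm, Algebra.TensorProduct.tmul_mul_tmul, omega_mul_omega_eq_add, zero_smul,
      add_zero, hgen.volumeElement_mul_self, Algebra.algebraMap_eq_smul_one,
      TensorProduct.smul_tmul_smul, smul_smul, ← Algebra.TensorProduct.one_def,
      ← Algebra.algebraMap_eq_smul_one, signedDisc_succ, hn.neg_one_pow]
    congr 1
    linear_combination (w 0 * (u * signedDisc (Fin.tail w) + 1)) * hu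
  · simp only [smul_mul_assoc, mul_smul_comm, Algebra.TensorProduct.tmul_mul_tmul, mul_one, one_mul,
      hgen.mul_volumeElement_of_even hn, TensorProduct.tmul_neg, smul_neg, neg_neg]

/-- The inverse of `ofCenterTensor`: as `ω = e₀η`, the generator `e₀` is `ωη` divided by the scalar
`η²`, whose inverse is `u`. -/
noncomputable def toCenterTensor (hn : Even n) {u : K}
    (hu : u * signedDisc (Fin.tail w) = 1) :
    DiagonalClifford w →ₐ[K]
      QuadraticAlgebra K (signedDisc w) 0 ⊗[K] DiagonalClifford (Fin.tail w) :=
  lift (isCliffordFamily_centerTensor hn hu)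

theorem toCenterTensor_gen_zero (hn : Even n) {u : K} (hu : u * signedDisc (Fin.tail w) = 1) :
    toCenterTensor hn hu (gen w 0) = u • (ω ⊗ₜ volumeElement (gen (Fin.tail w))) := by
  rw [toCenterTensor, lift_gen, Fin.cons_zero]

theorem toCenterTensor_gen_succ (hn : Even n) {u : K} (hu : u * signedDisc (Fin.tail w) = 1)
    (i : Fin n) : toCenterTensor hn hu (gen w i.succ) = 1 ⊗ₜ gen (Fin.tail w) i := by
  rw [toCenterTensor, lift_gen, Fin.cons_succ]

theorem ofCenterTensor_comp_toCenterTensor (hn : Even n) {u : K}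
    (hu : u * signedDisc (Fin.tail w) = 1) :
    (ofCenterTensor hn w).comp (toCenterTensor hn hu) = AlgHom.id K _ := by
  refine algHom_ext fun i => Fin.cases ?_ (fun i => ?_) i
  · set η := volumeElement (Fin.tail (gen w))
    have hη : η * η = algebraMap K _ (signedDisc (Fin.tail w)) :=
      (isCliffordFamily_gen w).tail.volumeElement_mul_self
    calc ofCenterTensor hn w (toCenterTensor hn hu (gen w 0))
        = u • (volumeElement (gen w) * η) := by
          rw [toCenterTensor_gen_zero, map_smul, ofCenterTensor_omega_tmul, map_volumeElement]
          simp only [lift_gen]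
          rfl
      _ = (u * signedDisc (Fin.tail w)) • gen w 0 := by
          rw [volumeElement_succ, mul_assoc, hη, ← Algebra.commutes, ← Algebra.smul_def, smul_smul]
      _ = gen w 0 := by rw [hu, one_smul]
  · rw [AlgHom.comp_apply, toCenterTensor_gen_succ, ofCenterTensor_one_tmul, lift_gen]
    rfl

theorem toCenterTensor_volumeElement (hn : Even n) {u : K}
    (hu : u * signedDisc (Fin.tail w) = 1) :
    toCenterTensor hn hu (volumeElement (gen w)) = ω ⊗ₜ 1 := by
  set η := volumeElement (gen (Fin.tail w))
  have map_tail : volumeElement (fun i : Fin n => toCenterTensor hn hu (gen w i.succ)) =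
      1 ⊗ₜ η := by
    simp only [toCenterTensor_gen_succ]
    exact (map_volumeElement
      (Algebra.TensorProduct.includeRight : _ →ₐ[K] QuadraticAlgebra K (signedDisc w) 0 ⊗[K] _)
      (gen (Fin.tail w))).symm
  calc toCenterTensor hn hu (volumeElement (gen w)) = (u • (ω ⊗ₜ η)) * (1 ⊗ₜ η) := by
        rw [map_volumeElement, volumeElement_succ, toCenterTensor_gen_zero, ← map_tail]
        rfl
    _ = (u * signedDisc (Fin.tail w)) • (ω ⊗ₜ 1) := by
        rw [smul_mul_assoc, Algebra.TensorProduct.tmul_mul_tmul, mul_one,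
          (isCliffordFamily_gen _).volumeElement_mul_self, Algebra.algebraMap_eq_smul_one,
          TensorProduct.tmul_smul, smul_smul]
    _ = ω ⊗ₜ 1 := by rw [hu, one_smul]

theorem toCenterTensor_comp_ofCenterTensor (hn : Even n) {u : K}
    (hu : u * signedDisc (Fin.tail w) = 1) :
    (toCenterTensor hn hu).comp (ofCenterTensor hn w) = AlgHom.id K _ := by
  refine Algebra.TensorProduct.ext (QuadraticAlgebra.algHom_ext ?_) (algHom_ext fun i => ?_)
  · simp [ofCenterTensor_omega_tmul, toCenterTensor_volumeElement]
  · calc toCenterTensor hn hu (ofCenterTensor hn w (1 ⊗ₜ gen (Fin.tail w) i))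
        = toCenterTensor hn hu (gen w i.succ) := by
          rw [ofCenterTensor_one_tmul, lift_gen]
          rfl
      _ = 1 ⊗ₜ gen (Fin.tail w) i := toCenterTensor_gen_succ hn hu i

/-- A diagonal Clifford algebra of odd rank is its quadratic subalgebra `K[√d]` spanned by `1` and
the volume element, tensored with the Clifford algebra of all the generators but the first. -/
noncomputable def centerTensorEquiv (hn : Even n) {u : K}
    (hu : u * signedDisc (Fin.tail w) = 1) :
    DiagonalClifford w ≃ₐ[K]
      QuadraticAlgebra K (signedDisc w) 0 ⊗[K] DiagonalClifford (Fin.tail w) :=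
  AlgEquiv.ofAlgHom (toCenterTensor hn hu) (ofCenterTensor hn w)
    (toCenterTensor_comp_ofCenterTensor hn hu) (ofCenterTensor_comp_toCenterTensor hn hu)

end OddRank

end DiagonalClifford

/-- `ℂ` as the quadratic algebra `ℝ[√-1]`, with `√-1` corresponding to `I`. -/
noncomputable def quadraticAlgebraEquivComplex : QuadraticAlgebra ℝ (-1) 0 ≃ₐ[ℝ] ℂ :=
  AlgEquiv.ofAlgHom
    (QuadraticAlgebra.lift ⟨Complex.I, by simp⟩)
    (Complex.lift ⟨QuadraticAlgebra.omega, by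
      rw [QuadraticAlgebra.omega_mul_omega_eq_add, neg_one_smul, zero_smul, add_zero]⟩)
    (by ext; simp)
    (QuadraticAlgebra.algHom_ext (by simp))

theorem cliffordAlgebra_four_mul_sub_one_isomorphic_complexClifford_general
    {K L : Type*} [CommRing K] [CommRing L] [Algebra K L] {n : ℕ} (hn : Even n)
    {w : Fin (n + 1) → K} (hw : ∀ i : Fin n, IsUnit (w i.succ))
    (e : QuadraticAlgebra K (signedDisc w) 0 ≃ₐ[K] L) :
    Nonempty
      (CliffordAlgebra (QuadraticMap.weightedSumSquares K w) ≃ₐ[K] RestrictScalars K L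
        (CliffordAlgebra (QuadraticMap.weightedSumSquares L
          fun i : Fin n => algebraMap K L (w i.succ)))) := by
  obtain ⟨u, hu⟩ := (isUnit_signedDisc hw).exists_left_inv
  exact ⟨((DiagonalClifford.centerTensorEquiv hn hu).trans
    (Algebra.TensorProduct.congr e AlgEquiv.refl)).trans
    (((DiagonalClifford.baseChangeEquiv L (Fin.tail w)).restrictScalars K).trans
      (AlgEquiv.ofRingEquiv (f := (RestrictScalars.ringEquiv K L _).symm) fun r => rfl))⟩

/-- First identity of eq. (7): `R_{4m−1} = C_{4m−2}`, i.e. the real Clifford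
algebra with `4m − 1` generators squaring to `+1` is isomorphic, as an
`ℝ`-algebra, to the complex Clifford algebra `Cℂ(4m − 2)` with scalars
restricted from `ℂ` to `ℝ`. -/
theorem cliffordAlgebra_four_mul_sub_one_isomorphic_complexClifford (m : ℕ) (hm : 1 ≤ m) :
    Nonempty
      (CliffordAlgebra (QuadraticMap.weightedSumSquares ℝ (fun _ : Fin (4 * m - 1) => (1 : ℝ)))
        ≃ₐ[ℝ] RestrictScalars ℝ ℂ
          (CliffordAlgebra (QuadraticMap.weightedSumSquares ℂ (fun _ : Fin (4 * m - 2) => (1 : ℂ))))) := by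
  obtain ⟨k, rfl⟩ := Nat.exists_eq_add_of_le' hm
  have disc : signedDisc (fun _ : Fin (4 * k + 2 + 1) => (1 : ℝ)) = -1 :=
    signedDisc_one_of_mod_four_eq_three (by omega)
  simpa using! cliffordAlgebra_four_mul_sub_one_isomorphic_complexClifford_general (n := 4 * k + 2)
    (by grind) (fun _ => isUnit_one) (disc ▸ quadraticAlgebraEquivComplex)
end
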